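/- arXiv:1202.0706 — 7 statements merged into one kernel-verified Lean document; each statement's English description precedes it below -/
import Mathlib

section
/- Let φ : (0,∞) → (0,∞) be increasing and differentiable with φ' nonnegative and decreasing and φ(λ) = ∫₀^λ φ'(s) ds for all λ > 0. Suppose there exist constants σ > 0, λ₀ > 0 and δ ∈ (0,1] such that φ'(λx) ≤ σ x^{−δ} φ'(λ) for all x ≥ 1 and all λ ≥ λ₀. Then for every ε > 0 there exists a constant c = c(ε) > 0 such that φ(λx) ≤ c · x^{1−δ+ε} · φ(λ) for all λ ≥ λ₀ and all x ≥ 1. -/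
open MeasureTheory Real Set

/-- A positive function on `(0,∞)` with antitone derivative lies above the line through the origin
with the slope of its tangent. -/
lemma mul_deriv_le_of_pos_of_antitone {f f' : ℝ → ℝ} (hpos : ∀ t : ℝ, 0 < t → 0 < f t)
    (hderiv : ∀ t : ℝ, 0 < t → HasDerivAt f (f' t) t)
    (hanti : ∀ s t : ℝ, 0 < s → s ≤ t → f' t ≤ f' s) {t : ℝ} (ht : 0 < t) :
    t * f' t ≤ f t := by
  by_contra! hlt
  have hft := hpos t ht
  have hf't : 0 < f' t := pos_of_mul_pos_right (hft.trans hlt) ht.le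
  have hquot : f t / f' t < t := (div_lt_iff₀ hf't).2 hlt
  have hquot_pos : 0 < f t / f' t := div_pos hft hf't
  have hs : 0 < t - f t / f' t := sub_pos.2 hquot
  obtain ⟨u, ⟨hu, hut⟩, hslope⟩ := exists_hasDerivAt_eq_slope f f'
    (show t - f t / f' t < t by linarith)
    (fun u hu => (hderiv u (hs.trans_le hu.1)).continuousAt.continuousWithinAt)
    (fun u hu => hderiv u (hs.trans hu.1))
  have hle : f' t ≤ f' u := hanti u t (hs.trans hu) hut.le
  rw [hslope, sub_sub_cancel, le_div_iff₀ hquot_pos, mul_div_cancel₀ _ hf't.ne'] at hle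
  linarith [hpos _ hs]

/-- If `f'(t) ≤ A t^(p-1)` on `(1,∞)` with `p > 0`, then `f` grows at most like `t^p`. -/
lemma le_add_mul_rpow_of_deriv_le {f f' : ℝ → ℝ} {A p : ℝ} (hp : 0 < p)
    (hderiv : ∀ t : ℝ, 1 ≤ t → HasDerivAt f (f' t) t)
    (hle : ∀ t : ℝ, 1 < t → f' t ≤ A * t ^ (p - 1)) {x : ℝ} (hx : 1 ≤ x) :
    f x ≤ f 1 + A / p * (x ^ p - 1) := by
  have hd : ∀ t : ℝ, 1 ≤ t →
      HasDerivAt (fun t => A / p * t ^ p - f t) (A / p * (p * t ^ (p - 1)) - f' t) t :=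
    fun t ht => ((hasDerivAt_rpow_const (Or.inl (by positivity))).const_mul _).sub (hderiv t ht)
  have hmono : MonotoneOn (fun t => A / p * t ^ p - f t) (Ici 1) := by
    refine monotoneOn_of_deriv_nonneg (convex_Ici 1)
      (fun t ht => (hd t ht).continuousAt.continuousWithinAt)
      (fun t ht => (hd t (interior_subset ht)).differentiableAt.differentiableWithinAt)
      fun t ht => ?_
    rw [interior_Ici] at ht
    rw [(hd t ht.le).deriv, ← mul_assoc, div_mul_cancel₀ _ hp.ne']
    exact sub_nonneg.2 (hle t ht)
  have h := hmono self_mem_Ici hx hx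
  simp only [one_rpow] at h
  linarith

/-- If `φ : (0,∞) → (0,∞)` is increasing and differentiable with
`φ'` nonnegative and decreasing, `φ(λ) = ∫₀^λ φ'(s) ds`, and condition (A-3)
holds with constants `σ > 0`, `λ₀ > 0`, `δ ∈ (0,1]`, then for every `ε > 0`
there is `c > 0` with `φ(λx) ≤ c x^{1-δ+ε} φ(λ)` for all `λ ≥ λ₀`, `x ≥ 1`. -/
theorem stmt_1 (φ φ' : ℝ → ℝ) (σ lam₀ δ : ℝ)
    (hφpos : ∀ l : ℝ, 0 < l → 0 < φ l)
    (hφmono : ∀ s t : ℝ, 0 < s → s ≤ t → φ s ≤ φ t)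
    (hderiv : ∀ l : ℝ, 0 < l → HasDerivAt φ (φ' l) l)
    (hφ'nonneg : ∀ l : ℝ, 0 < l → 0 ≤ φ' l)
    (hφ'dec : ∀ s t : ℝ, 0 < s → s ≤ t → φ' t ≤ φ' s)
    (hrep : ∀ l : ℝ, 0 < l → φ l = ∫ s in (0:ℝ)..l, φ' s)
    (hσ : 0 < σ) (hlam₀ : 0 < lam₀) (hδ0 : 0 < δ) (hδ1 : δ ≤ 1)
    (hA3 : ∀ x : ℝ, 1 ≤ x → ∀ l : ℝ, lam₀ ≤ l →
      φ' (l * x) ≤ σ * x ^ (-δ) * φ' l) :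
    ∀ ε : ℝ, 0 < ε → ∃ c : ℝ, 0 < c ∧ ∀ l : ℝ, lam₀ ≤ l → ∀ x : ℝ, 1 ≤ x →
      φ (l * x) ≤ c * x ^ (1 - δ + ε) * φ l := by
  intro ε hε
  have hp : 0 < 1 - δ + ε := by linarith
  refine ⟨1 + σ / (1 - δ + ε), by positivity, fun l hl x hx => ?_⟩
  have hl0 : 0 < l := hlam₀.trans_le hl
  have hφl := hφpos l hl0
  have htangent := mul_deriv_le_of_pos_of_antitone hφpos hderiv hφ'dec hl0
  have hgrowth := le_add_mul_rpow_of_deriv_le (f := fun t => φ (l * t))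
    (f' := fun t => φ' (l * t) * l) (A := σ * φ l) hp
    (fun t ht => (hderiv (l * t) (by positivity)).comp t
      (by simpa using (hasDerivAt_id t).const_mul l))
    (fun t ht => calc
      φ' (l * t) * l ≤ σ * t ^ (-δ) * φ' l * l := by gcongr; exact hA3 t ht.le l hl
      _ = σ * t ^ (-δ) * (l * φ' l) := by ring
      _ ≤ σ * t ^ (1 - δ + ε - 1) * φ l := by
        have hmulnonneg := mul_nonneg hl0.le (hφ'nonneg l hl0)
        gcongr
        · exact ht.le
        · linarith
      _ = σ * φ l * t ^ (1 - δ + ε - 1) := by ring) hx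
  have hone : 1 ≤ x ^ (1 - δ + ε) := one_le_rpow hx hp.le
  have hratio : 0 < σ / (1 - δ + ε) := by positivity
  simp only [mul_one] at hgrowth
  calc φ (l * x) ≤ φ l + σ * φ l / (1 - δ + ε) * (x ^ (1 - δ + ε) - 1) := hgrowth
    _ = φ l * (1 + σ / (1 - δ + ε) * (x ^ (1 - δ + ε) - 1)) := by ring
    _ ≤ φ l * ((1 + σ / (1 - δ + ε)) * x ^ (1 - δ + ε)) := by gcongr; linarith
    _ = (1 + σ / (1 - δ + ε)) * x ^ (1 - δ + ε) * φ l := by ring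
end

section
/- Let φ : (0,∞) → (0,∞) be differentiable and suppose there exist constants σ ≥ 2, λ₀ > 0 and δ ∈ (0,1] such that φ'(λx) ≤ σ x^{−δ} φ'(λ) for all x ≥ 1 and all λ ≥ λ₀. Then for every ε > 0, every λ ≥ λ₀ and every integer k ≥ 2, one has φ(λ σ^{k/ε}) − φ(λ σ^{(k−1)/ε}) ≤ σ^{(k−1)(1 + (1−δ)/ε)} · (φ(λ σ^{1/ε}) − φ(λ)). -/
open MeasureTheory Real Set

/-- A function with nonnegative derivative `f'` on `[a, ∞)` is monotone there. -/
theorem monotoneOn_Ici_of_hasDerivAt_nonneg {f f' : ℝ → ℝ} {a : ℝ}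
    (hf : ∀ t, a ≤ t → HasDerivAt f (f' t) t) (hf' : ∀ t, a ≤ t → 0 ≤ f' t) :
    MonotoneOn f (Ici a) := by
  refine monotoneOn_of_hasDerivWithinAt_nonneg (convex_Ici a)
    (fun t ht => (hf t ht).continuousAt.continuousWithinAt)
    (fun t ht => (hf t (interior_subset ht)).hasDerivWithinAt)
    (fun t ht => hf' t (interior_subset ht))

/-- If `φ' (t * s) ≤ σ * s ^ (-δ) * φ' t` for `t ≥ a`, then dilating an interval in `[a, ∞)` by `s`
multiplies the increment of `φ` by at most `σ * s ^ (1 - δ)`. -/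
theorem increment_dilation_le {φ φ' : ℝ → ℝ} {σ δ a s : ℝ} (ha : 0 < a) (hs : 0 < s)
    (hderiv : ∀ t, 0 < t → HasDerivAt φ (φ' t) t)
    (hle : ∀ t, a ≤ t → φ' (t * s) ≤ σ * s ^ (-δ) * φ' t) {b c : ℝ} (hb : a ≤ b) (hbc : b ≤ c) :
    φ (c * s) - φ (b * s) ≤ σ * s ^ (1 - δ) * (φ c - φ b) := by
  have hmono : MonotoneOn (fun t => σ * s ^ (1 - δ) * φ t - φ (t * s)) (Ici a) := by
    refine monotoneOn_Ici_of_hasDerivAt_nonneg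
      (f' := fun t => σ * s ^ (1 - δ) * φ' t - φ' (t * s) * s) (fun t ht => ?_) (fun t ht => ?_)
    · have ht0 : 0 < t := ha.trans_le ht
      exact ((hderiv t ht0).const_mul _).sub
        ((hderiv (t * s) (mul_pos ht0 hs)).comp t (hasDerivAt_mul_const s))
    · have hpow : s ^ (1 - δ) = s ^ (-δ) * s := by
        rw [sub_eq_neg_add, rpow_add_one hs.ne']
      have := mul_le_mul_of_nonneg_right (hle t ht) hs.le
      simp only [hpow]
      linarith
  have := hmono hb (hb.trans hbc) hbc
  simp only at this
  linarith

/-- Under condition (A-3) with `σ ≥ 2`, `λ₀ > 0`, `δ ∈ (0,1]`,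
for every `ε > 0`, `λ ≥ λ₀` and integer `k ≥ 2`,
`φ(λ σ^{k/ε}) − φ(λ σ^{(k−1)/ε}) ≤ σ^{(k−1)(1+(1−δ)/ε)} (φ(λ σ^{1/ε}) − φ(λ))`. -/
theorem stmt_2 (φ φ' : ℝ → ℝ) (σ lam₀ δ : ℝ)
    (hφpos : ∀ l : ℝ, 0 < l → 0 < φ l)
    (hderiv : ∀ l : ℝ, 0 < l → HasDerivAt φ (φ' l) l)
    (hσ : 2 ≤ σ) (hlam₀ : 0 < lam₀) (hδ0 : 0 < δ) (hδ1 : δ ≤ 1)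
    (hA3 : ∀ x : ℝ, 1 ≤ x → ∀ l : ℝ, lam₀ ≤ l →
      φ' (l * x) ≤ σ * x ^ (-δ) * φ' l) :
    ∀ ε : ℝ, 0 < ε → ∀ l : ℝ, lam₀ ≤ l → ∀ k : ℕ, 2 ≤ k →
      φ (l * σ ^ ((k : ℝ) / ε)) - φ (l * σ ^ (((k : ℝ) - 1) / ε))
        ≤ σ ^ (((k : ℝ) - 1) * (1 + (1 - δ) / ε)) *
            (φ (l * σ ^ (1 / ε)) - φ l) := by
  intro ε hε l hl k hk
  have hσ0 : 0 < σ := by linarith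
  have hσ1 : 1 ≤ σ := by linarith
  have hk' : (2 : ℝ) ≤ k := by exact_mod_cast hk
  have hl0 : 0 < l := hlam₀.trans_le hl
  have hφ' : ∀ t, lam₀ ≤ t → 0 ≤ φ' t := fun t ht => by
    have := hA3 1 le_rfl t ht
    simp only [mul_one, one_rpow] at this
    nlinarith
  have hle : l ≤ l * σ ^ (1 / ε) :=
    le_mul_of_one_le_right hl0.le (one_le_rpow hσ1 (by positivity))
  have hincr : 0 ≤ φ (l * σ ^ (1 / ε)) - φ l :=
    sub_nonneg.2 (monotoneOn_Ici_of_hasDerivAt_nonneg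
      (fun t ht => hderiv t (hlam₀.trans_le ht)) hφ' hl (hl.trans hle) hle)
  have hs1 : 1 ≤ σ ^ (((k : ℝ) - 1) / ε) :=
    one_le_rpow hσ1 (div_nonneg (by linarith) hε.le)
  have hdil := increment_dilation_le hlam₀ (zero_lt_one.trans_le hs1) hderiv
    (fun t ht => hA3 _ hs1 t ht) hl hle
  have hexp : l * σ ^ (1 / ε) * σ ^ (((k : ℝ) - 1) / ε) = l * σ ^ ((k : ℝ) / ε) := by
    rw [mul_assoc, ← rpow_add hσ0]
    congr 2
    ring
  rw [hexp] at hdil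
  refine hdil.trans (mul_le_mul_of_nonneg_right ?_ hincr)
  rw [← rpow_mul hσ0.le, ← rpow_one_add' hσ0.le]
  · refine rpow_le_rpow_of_exponent_le hσ1 ?_
    have : ((k : ℝ) - 1) * (1 + (1 - δ) / ε) = (k - 1) + (k - 1) / ε * (1 - δ) := by ring
    linarith
  · have : 0 ≤ ((k : ℝ) - 1) / ε * (1 - δ) :=
      mul_nonneg (div_nonneg (by linarith) hε.le) (by linarith)
    linarith
end

section
/- Let μ : (0,∞) → (0,∞) be decreasing with ∫₀^∞ (1 ∧ t) μ(t) dt < ∞, and define φ(λ) = ∫₀^∞ (1 − e^{−λt}) μ(t) dt for λ > 0, so that φ is differentiable with φ'(λ) = ∫₀^∞ t e^{−λt} μ(t) dt positive and decreasing. Suppose there exist constants σ > 0, λ₀ > 0 and δ ∈ (0,1] such that φ'(λx) ≤ σ x^{−δ} φ'(λ) for all x ≥ 1 and λ ≥ λ₀. Then there exist constants c₁, c₂ > 0 such that c₁ t^{−2} φ'(t^{−1}) ≤ μ(t) ≤ c₂ t^{−2} φ'(t^{−1}) for all 0 < t ≤ 1/λ₀; in particular μ(t) ≍ t^{−2} φ'(t^{−1})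 as t → 0+. -/
open MeasureTheory Real Set

/-- The gamma integral `∫₀^∞ s e^{-ms} ds = m⁻²`. -/
theorem integral_id_mul_exp_neg_mul_Ioi {m : ℝ} (hm : 0 < m) :
    ∫ s in Ioi (0 : ℝ), s * Real.exp (-(m * s)) = (m ^ 2)⁻¹ := by
  have h := Real.integral_rpow_mul_exp_neg_mul_Ioi (a := 2) (r := m) (by norm_num) hm
  have h1 : (2 : ℝ) - 1 = 1 := by norm_num
  simp only [h1, Real.rpow_one, Real.Gamma_two, mul_one] at h
  rw [h, Real.rpow_two, one_div, inv_pow]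

/-- A decreasing function on `(0, ∞)` is controlled by its weighted Laplace transform. -/
theorem le_inv_sq_mul_laplace {μ : ℝ → ℝ} {t : ℝ} (ht : 0 < t)
    (hμpos : ∀ s : ℝ, 0 < s → 0 < μ s)
    (hμdec : ∀ s t : ℝ, 0 < s → s ≤ t → μ t ≤ μ s)
    (hint : IntegrableOn (fun s => s * Real.exp (-(t⁻¹ * s)) * μ s) (Ioi 0)) :
    μ t ≤ 2 * Real.exp 1 * (t ^ 2)⁻¹ *
      ∫ s in Ioi (0 : ℝ), s * Real.exp (-(t⁻¹ * s)) * μ s := by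
  have hlow : ∫ s in Ioc 0 t, s * (Real.exp (-1) * μ t) ≤
      ∫ s in Ioi (0 : ℝ), s * Real.exp (-(t⁻¹ * s)) * μ s := by
    refine (setIntegral_mono_on ?_ (hint.mono_set Ioc_subset_Ioi_self) measurableSet_Ioc
      fun s hs => ?_).trans
      (setIntegral_mono_set hint ?_ (Filter.Eventually.of_forall Ioc_subset_Ioi_self))
    · exact ((continuous_id.mul continuous_const).integrableOn_Icc).mono_set Ioc_subset_Icc_self
    · have hst : t⁻¹ * s ≤ 1 := by
        rw [inv_mul_le_iff₀ ht]; linarith [hs.2]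
      have := hμdec s t hs.1 hs.2
      have := hμpos t ht
      have := hs.1
      rw [mul_assoc]
      gcongr
    · refine (ae_restrict_mem measurableSet_Ioi).mono fun s hs => ?_
      have := hμpos s hs
      have : (0 : ℝ) < s := hs
      simp only [Pi.zero_apply]
      positivity
  rw [integral_mul_const, ← intervalIntegral.integral_of_le ht.le, integral_id] at hlow
  calc μ t = 2 * Real.exp 1 * (t ^ 2)⁻¹ * ((t ^ 2 - 0 ^ 2) / 2 * (Real.exp (-1) * μ t)) := by
        rw [Real.exp_neg]
        have := Real.exp_pos 1
        field_simp
        ring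
    _ ≤ _ := by gcongr

/-- Comparison of the weighted Laplace transform of a decreasing function at `m` with its value
at `t⁻¹`; the error is the part of the integral over `(t, ∞)`. -/
theorem laplace_le_add {μ : ℝ → ℝ} {t m : ℝ} (ht : 0 < t) (hm : 0 < m)
    (hμpos : ∀ s : ℝ, 0 < s → 0 < μ s)
    (hμdec : ∀ s t : ℝ, 0 < s → s ≤ t → μ t ≤ μ s)
    (hint : ∀ l : ℝ, 0 < l → IntegrableOn (fun s => s * Real.exp (-(l * s)) * μ s) (Ioi 0)) :
    ∫ s in Ioi (0 : ℝ), s * Real.exp (-(m * s)) * μ s ≤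
      Real.exp 1 * (∫ s in Ioi (0 : ℝ), s * Real.exp (-(t⁻¹ * s)) * μ s) +
        (m ^ 2)⁻¹ * μ t := by
  have hgamma : IntegrableOn (fun s : ℝ => s * Real.exp (-(m * s))) (Ioi 0) := by
    by_contra h
    have h1 := integral_undef h
    rw [integral_id_mul_exp_neg_mul_Ioi hm] at h1
    exact (by positivity : (m ^ 2)⁻¹ ≠ 0) h1
  have hl := hint t⁻¹ (by positivity)
  rw [← integral_id_mul_exp_neg_mul_Ioi hm, ← integral_const_mul, ← integral_mul_const,
    ← integral_add (hl.const_mul _) (hgamma.mul_const _)]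
  refine setIntegral_mono_on (hint m hm) ((hl.const_mul _).add (hgamma.mul_const _))
    measurableSet_Ioi fun s hs => ?_
  have hs : 0 < s := hs
  have hμs := hμpos s hs
  have hμt := hμpos t ht
  rcases le_total s t with hst | hst
  · have hexp : Real.exp (-(m * s)) ≤ Real.exp 1 * Real.exp (-(t⁻¹ * s)) := by
      rw [← Real.exp_add, Real.exp_le_exp]
      have : t⁻¹ * s ≤ 1 := by rw [inv_mul_le_iff₀ ht]; linarith
      have : 0 < m * s := by positivity
      linarith
    calc s * Real.exp (-(m * s)) * μ s
        ≤ s * (Real.exp 1 * Real.exp (-(t⁻¹ * s))) * μ s := by gcongr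
      _ = Real.exp 1 * (s * Real.exp (-(t⁻¹ * s)) * μ s) := by ring
      _ ≤ _ := le_add_of_nonneg_right (by positivity)
  · calc s * Real.exp (-(m * s)) * μ s ≤ s * Real.exp (-(m * s)) * μ t := by
          gcongr
          exact hμdec t s ht hst
      _ ≤ _ := le_add_of_nonneg_left (by positivity)

/-- If `μ` is a decreasing Lévy density with
`∫₀^∞ (1 ∧ t) μ(t) dt < ∞`, `φ(λ) = ∫₀^∞ (1 − e^{−λt}) μ(t) dt` with
`φ'(λ) = ∫₀^∞ t e^{−λt} μ(t) dt` positive and decreasing, and condition (A-3)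
holds, then `μ(t) ≍ t^{−2} φ'(t^{−1})` for `0 < t ≤ 1/λ₀`. -/
theorem stmt_3 (μ φ φ' : ℝ → ℝ) (σ lam₀ δ : ℝ)
    (hμpos : ∀ t : ℝ, 0 < t → 0 < μ t)
    (hμdec : ∀ s t : ℝ, 0 < s → s ≤ t → μ t ≤ μ s)
    (hμint : IntegrableOn (fun t => min 1 t * μ t) (Ioi 0))
    (hφ : ∀ l : ℝ, 0 < l →
      φ l = ∫ t in Ioi (0:ℝ), (1 - Real.exp (-(l * t))) * μ t)
    (hφ' : ∀ l : ℝ, 0 < l →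
      φ' l = ∫ t in Ioi (0:ℝ), t * Real.exp (-(l * t)) * μ t)
    (hderiv : ∀ l : ℝ, 0 < l → HasDerivAt φ (φ' l) l)
    (hφ'pos : ∀ l : ℝ, 0 < l → 0 < φ' l)
    (hφ'dec : ∀ s t : ℝ, 0 < s → s ≤ t → φ' t ≤ φ' s)
    (hσ : 0 < σ) (hlam₀ : 0 < lam₀) (hδ0 : 0 < δ) (hδ1 : δ ≤ 1)
    (hA3 : ∀ x : ℝ, 1 ≤ x → ∀ l : ℝ, lam₀ ≤ l →
      φ' (l * x) ≤ σ * x ^ (-δ) * φ' l) :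
    ∃ c₁ : ℝ, 0 < c₁ ∧ ∃ c₂ : ℝ, 0 < c₂ ∧
      ∀ t : ℝ, 0 < t → t ≤ 1 / lam₀ →
        c₁ * (t ^ 2)⁻¹ * φ' t⁻¹ ≤ μ t ∧ μ t ≤ c₂ * (t ^ 2)⁻¹ * φ' t⁻¹ := by
  have hint : ∀ l : ℝ, 0 < l →
      IntegrableOn (fun s => s * Real.exp (-(l * s)) * μ s) (Ioi 0) := fun l hl => by
    by_contra h
    exact (hφ'pos l hl).ne' ((hφ' l hl).trans (integral_undef h))
  obtain ⟨x, hx1, hxσ⟩ : ∃ x : ℝ, 1 ≤ x ∧ Real.exp 1 * σ * x ^ (-δ) ≤ 1 / 2 := by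
    have hlim := (tendsto_rpow_neg_atTop hδ0).const_mul (Real.exp 1 * σ)
    rw [mul_zero] at hlim
    obtain ⟨x, h1, h2⟩ := ((Filter.eventually_ge_atTop 1).and
      (hlim.eventually_le_const (by norm_num : (0 : ℝ) < 1 / 2))).exists
    exact ⟨x, h1, h2⟩
  have hx0 : 0 < x := by linarith
  have hμ₀ := hμpos (1 / lam₀) (by positivity)
  have hφ₀ := hφ'pos lam₀ hlam₀
  set c := μ (1 / lam₀) / (x ^ 2 * lam₀ ^ 2 * φ' lam₀) with hc
  have hcpos : 0 < c := by positivity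
  refine ⟨min (1 / (2 * x ^ 2)) c, lt_min (by positivity) hcpos, 2 * Real.exp 1, by positivity,
    fun t ht htl => ⟨?_, ?_⟩⟩
  · have hl : lam₀ ≤ t⁻¹ := by
      rw [one_div] at htl
      exact (le_inv_comm₀ ht hlam₀).1 htl
    have hφt := hφ'pos t⁻¹ (by positivity)
    rcases le_total (x * lam₀) t⁻¹ with hcase | hcase
    · have hm : 0 < t⁻¹ / x := by positivity
      have hA := hA3 x hx1 (t⁻¹ / x) (by rw [le_div_iff₀ hx0]; linarith)
      rw [div_mul_cancel₀ _ hx0.ne'] at hA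
      have hmain := laplace_le_add ht hm hμpos hμdec hint
      rw [← hφ' _ hm, ← hφ' _ (inv_pos.2 ht)] at hmain
      have hφm := hφ'pos _ hm
      have hhalf : Real.exp 1 * φ' t⁻¹ ≤ 1 / 2 * φ' (t⁻¹ / x) :=
        calc Real.exp 1 * φ' t⁻¹ ≤ Real.exp 1 * (σ * x ^ (-δ) * φ' (t⁻¹ / x)) := by gcongr
          _ = Real.exp 1 * σ * x ^ (-δ) * φ' (t⁻¹ / x) := by ring
          _ ≤ _ := by gcongr
      have hdec := hφ'dec (t⁻¹ / x) t⁻¹ hm (div_le_self (by positivity) hx1)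
      have hbound : φ' t⁻¹ ≤ 2 * (((t⁻¹ / x) ^ 2)⁻¹ * μ t) := by linarith
      calc min (1 / (2 * x ^ 2)) c * (t ^ 2)⁻¹ * φ' t⁻¹
          ≤ 1 / (2 * x ^ 2) * (t ^ 2)⁻¹ * (2 * (((t⁻¹ / x) ^ 2)⁻¹ * μ t)) := by
            gcongr
            exact min_le_left _ _
        _ = μ t := by field_simp
    · calc min (1 / (2 * x ^ 2)) c * (t ^ 2)⁻¹ * φ' t⁻¹
          ≤ c * (x * lam₀) ^ 2 * φ' lam₀ := by
            rw [← inv_pow]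
            gcongr
            · exact min_le_right _ _
            · exact hφ'dec _ _ hlam₀ hl
        _ = μ (1 / lam₀) := by rw [hc]; field_simp
        _ ≤ μ t := hμdec _ _ ht htl
  · rw [hφ' _ (inv_pos.2 ht)]
    exact le_inv_sq_mul_laplace ht hμpos hμdec (hint _ (inv_pos.2 ht))
end

section
/- Let φ : (0,∞) → (0,∞) be increasing and differentiable with derivative φ' positive and decreasing, and let u : (0,∞) → (0,∞) be a decreasing function such that ∫₀^∞ e^{−λt} u(t) dt = 1/φ(λ) for all λ > 0. Suppose there exist constants σ > 0, λ₀ > 0 and δ ∈ (0,1] such that φ'(λx) ≤ σ x^{−δ} φ'(λ) for all x ≥ 1 and λ ≥ λ₀. Then there exist constants c₁, c₂ > 0 such that c₁ t^{−2} φ'(t^{−1})/φ(t^{−1})² ≤ u(t) ≤ c₂ t^{−2} φ'(t^{−1})/φ(t^{−1})² for all 0 < t ≤ 1/λ₀; in particular u(t) ≍ t^{−2} φ'(t^{−1})/φ(t^{−1})² as t → 0+. -/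
open MeasureTheory Real Set

/-- A function with positive Laplace transform has an integrable Laplace integrand. -/
lemma integrableOn_exp_mul_of_laplace {φ u : ℝ → ℝ} (hφpos : ∀ l : ℝ, 0 < l → 0 < φ l)
    (hlap : ∀ l : ℝ, 0 < l → (∫ t in Ioi (0:ℝ), Real.exp (-(l * t)) * u t) = 1 / φ l)
    {l : ℝ} (hl : 0 < l) :
    IntegrableOn (fun t => Real.exp (-(l * t)) * u t) (Ioi 0) := by
  by_contra h
  have h0 := hlap l hl
  rw [integral_undef h] at h0
  have := one_div_pos.2 (hφpos l hl)
  linarith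

lemma integrableOn_sub_exp_mul_of_laplace {φ u : ℝ → ℝ} (hφpos : ∀ l : ℝ, 0 < l → 0 < φ l)
    (hlap : ∀ l : ℝ, 0 < l → (∫ t in Ioi (0:ℝ), Real.exp (-(l * t)) * u t) = 1 / φ l)
    {a b : ℝ} (ha : 0 < a) (hb : 0 < b) :
    IntegrableOn (fun t => (Real.exp (-(a * t)) - Real.exp (-(b * t))) * u t) (Ioi 0) := by
  simp only [sub_mul]
  exact (integrableOn_exp_mul_of_laplace hφpos hlap ha).sub
    (integrableOn_exp_mul_of_laplace hφpos hlap hb)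

lemma integral_sub_exp_mul_of_laplace {φ u : ℝ → ℝ} (hφpos : ∀ l : ℝ, 0 < l → 0 < φ l)
    (hlap : ∀ l : ℝ, 0 < l → (∫ t in Ioi (0:ℝ), Real.exp (-(l * t)) * u t) = 1 / φ l)
    {a b : ℝ} (ha : 0 < a) (hb : 0 < b) :
    ∫ t in Ioi (0:ℝ), (Real.exp (-(a * t)) - Real.exp (-(b * t))) * u t
      = 1 / φ a - 1 / φ b := by
  simp only [sub_mul]
  rw [integral_sub (integrableOn_exp_mul_of_laplace hφpos hlap ha)
    (integrableOn_exp_mul_of_laplace hφpos hlap hb), hlap a ha, hlap b hb]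

/-- Mean value bounds for a function with decreasing derivative. -/
lemma sub_bounds_of_deriv_antitone {φ φ' : ℝ → ℝ}
    (hderiv : ∀ l : ℝ, 0 < l → HasDerivAt φ (φ' l) l)
    (hφ'dec : ∀ s t : ℝ, 0 < s → s ≤ t → φ' t ≤ φ' s) {a b : ℝ} (ha : 0 < a) (hab : a < b) :
    φ' b * (b - a) ≤ φ b - φ a ∧ φ b - φ a ≤ φ' a * (b - a) := by
  obtain ⟨c, ⟨hac, hcb⟩, hc⟩ := exists_hasDerivAt_eq_slope φ φ' hab
    (fun x hx => (hderiv x (ha.trans_le hx.1)).continuousAt.continuousWithinAt)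
    (fun x hx => hderiv x (ha.trans hx.1))
  have hba : 0 < b - a := sub_pos.2 hab
  rw [eq_div_iff hba.ne'] at hc
  rw [← hc]
  exact ⟨mul_le_mul_of_nonneg_right (hφ'dec c b (ha.trans hac) hcb.le) hba.le,
    mul_le_mul_of_nonneg_right (hφ'dec a c ha hac.le) hba.le⟩

/-- Bounds for increments of `1 / φ` in terms of `φ' / φ ^ 2` at the endpoints. -/
lemma one_div_sub_one_div_bounds {φ φ' : ℝ → ℝ}
    (hφpos : ∀ l : ℝ, 0 < l → 0 < φ l)
    (hφmono : ∀ s t : ℝ, 0 < s → s ≤ t → φ s ≤ φ t)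
    (hderiv : ∀ l : ℝ, 0 < l → HasDerivAt φ (φ' l) l)
    (hφ'pos : ∀ l : ℝ, 0 < l → 0 < φ' l)
    (hφ'dec : ∀ s t : ℝ, 0 < s → s ≤ t → φ' t ≤ φ' s) {a b : ℝ} (ha : 0 < a) (hab : a < b) :
    (b - a) * (φ' b / φ b ^ 2) ≤ 1 / φ a - 1 / φ b ∧
      1 / φ a - 1 / φ b ≤ (b - a) * (φ' a / φ a ^ 2) := by
  obtain ⟨h1, h2⟩ := sub_bounds_of_deriv_antitone hderiv hφ'dec ha hab
  have hb := ha.trans hab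
  have hm := hφmono a b ha hab.le
  have pa := hφpos a ha
  have pb := hφpos b hb
  have hba : 0 < b - a := sub_pos.2 hab
  have da := mul_pos (hφ'pos a ha) hba
  have db := mul_pos (hφ'pos b hb) hba
  have e : 1 / φ a - 1 / φ b = (φ b - φ a) / (φ a * φ b) := by
    field_simp
  rw [e, mul_comm (b - a), mul_comm (b - a), div_mul_eq_mul_div, div_mul_eq_mul_div]
  constructor
  · apply div_le_div₀ (db.le.trans h1) h1 (mul_pos pa pb)
    nlinarith
  · apply div_le_div₀ da.le h2 (by positivity)
    nlinarith

lemma deriv_div_sq_antitone {φ φ' : ℝ → ℝ}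
    (hφpos : ∀ l : ℝ, 0 < l → 0 < φ l)
    (hφmono : ∀ s t : ℝ, 0 < s → s ≤ t → φ s ≤ φ t)
    (hφ'pos : ∀ l : ℝ, 0 < l → 0 < φ' l)
    (hφ'dec : ∀ s t : ℝ, 0 < s → s ≤ t → φ' t ≤ φ' s) {a b : ℝ} (ha : 0 < a) (hab : a ≤ b) :
    φ' b / φ b ^ 2 ≤ φ' a / φ a ^ 2 := by
  have pa := hφpos a ha
  exact div_le_div₀ (hφ'pos a ha).le (hφ'dec a b ha hab) (by positivity)
    (pow_le_pow_left₀ pa.le (hφmono a b ha hab) 2)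

/-- The upper bound for a decreasing potential density, valid without any scaling condition. -/
lemma potential_density_upper_bound {φ φ' u : ℝ → ℝ}
    (hφpos : ∀ l : ℝ, 0 < l → 0 < φ l)
    (hφmono : ∀ s t : ℝ, 0 < s → s ≤ t → φ s ≤ φ t)
    (hderiv : ∀ l : ℝ, 0 < l → HasDerivAt φ (φ' l) l)
    (hφ'pos : ∀ l : ℝ, 0 < l → 0 < φ' l)
    (hφ'dec : ∀ s t : ℝ, 0 < s → s ≤ t → φ' t ≤ φ' s)
    (hupos : ∀ t : ℝ, 0 < t → 0 < u t)
    (hudec : ∀ s t : ℝ, 0 < s → s ≤ t → u t ≤ u s)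
    (hlap : ∀ l : ℝ, 0 < l →
      (∫ t in Ioi (0:ℝ), Real.exp (-(l * t)) * u t) = 1 / φ l) :
    ∃ C : ℝ, 0 < C ∧ ∀ t : ℝ, 0 < t →
      u t ≤ C * (t ^ 2)⁻¹ * (φ' t⁻¹ / (φ t⁻¹) ^ 2) := by
  set κ : ℝ := Real.exp (-1) * (1 - Real.exp (-(1/2))) with hκ
  have hκpos : 0 < κ := by
    have : Real.exp (-(1/2)) < 1 := Real.exp_lt_one_iff.2 (by norm_num)
    exact mul_pos (Real.exp_pos _) (by linarith)
  refine ⟨2 / κ, by positivity, fun t ht => ?_⟩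
  have hti : 0 < t⁻¹ := inv_pos.2 ht
  have hlt : t⁻¹ < 2 * t⁻¹ := by linarith
  have hint := integrableOn_sub_exp_mul_of_laplace hφpos hlap hti (hti.trans hlt)
  have hsub : Ioc (t/2) t ⊆ Ioi (0:ℝ) := fun s hs => (half_pos ht).trans hs.1
  have hnn : ∀ s ∈ Ioi (0:ℝ),
      0 ≤ (Real.exp (-(t⁻¹ * s)) - Real.exp (-(2 * t⁻¹ * s))) * u s := by
    intro s hs
    refine mul_nonneg (sub_nonneg.2 (Real.exp_le_exp.2 ?_)) (hupos s hs).le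
    have := mul_pos hti hs
    linarith
  have hlow : (t / 2) * (κ * u t) ≤
      ∫ s in Ioc (t/2) t, (Real.exp (-(t⁻¹ * s)) - Real.exp (-(2 * t⁻¹ * s))) * u s := by
    have hc : ∫ _ in Ioc (t/2) t, κ * u t = (t / 2) * (κ * u t) := by
      rw [setIntegral_const, smul_eq_mul, measureReal_def, Real.volume_Ioc,
        ENNReal.toReal_ofReal (by linarith)]
      ring
    rw [← hc]
    refine setIntegral_mono_on (integrableOn_const (by simp)) (hint.mono_set hsub)
      measurableSet_Ioc fun s hs => ?_
    have hs0 : 0 < s := hsub hs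
    have hx1 : t⁻¹ * s ≤ 1 := by
      rw [inv_mul_le_iff₀ ht]; linarith [hs.2]
    have hx2 : 1 / 2 ≤ t⁻¹ * s := by
      rw [le_inv_mul_iff₀ ht]; linarith [hs.1]
    have e1 : Real.exp (-1) ≤ Real.exp (-(t⁻¹ * s)) := Real.exp_le_exp.2 (by linarith)
    have e2 : Real.exp (-(t⁻¹ * s)) ≤ Real.exp (-(1/2)) := Real.exp_le_exp.2 (by linarith)
    have e3 : Real.exp (-(2 * t⁻¹ * s)) = Real.exp (-(t⁻¹ * s)) * Real.exp (-(t⁻¹ * s)) := by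
      rw [← Real.exp_add]; ring_nf
    have e4 : Real.exp (-(1/2)) < 1 := Real.exp_lt_one_iff.2 (by norm_num)
    have hw : κ ≤ Real.exp (-(t⁻¹ * s)) - Real.exp (-(2 * t⁻¹ * s)) := by
      have : Real.exp (-(t⁻¹ * s)) - Real.exp (-(2 * t⁻¹ * s)) =
          Real.exp (-(t⁻¹ * s)) * (1 - Real.exp (-(t⁻¹ * s))) := by rw [e3]; ring
      rw [this]
      exact mul_le_mul e1 (by linarith) (by linarith) (Real.exp_pos _).le
    exact mul_le_mul hw (hudec s t hs0 hs.2) (hupos t ht).le (hκpos.le.trans hw)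
  have hmono : ∫ s in Ioc (t/2) t,
      (Real.exp (-(t⁻¹ * s)) - Real.exp (-(2 * t⁻¹ * s))) * u s ≤
      ∫ s in Ioi (0:ℝ), (Real.exp (-(t⁻¹ * s)) - Real.exp (-(2 * t⁻¹ * s))) * u s :=
    setIntegral_mono_set hint ((ae_restrict_iff' measurableSet_Ioi).2 (ae_of_all _ hnn))
      hsub.eventuallyLE
  rw [integral_sub_exp_mul_of_laplace hφpos hlap hti (hti.trans hlt)] at hmono
  have hup := (one_div_sub_one_div_bounds hφpos hφmono hderiv hφ'pos hφ'dec hti hlt).2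
  have key : (t / 2) * (κ * u t) ≤ t⁻¹ * (φ' t⁻¹ / φ t⁻¹ ^ 2) := by
    refine (hlow.trans hmono).trans (hup.trans (le_of_eq ?_))
    ring
  calc u t = 2 / κ * t⁻¹ * ((t / 2) * (κ * u t)) := by field_simp
    _ ≤ 2 / κ * t⁻¹ * (t⁻¹ * (φ' t⁻¹ / φ t⁻¹ ^ 2)) :=
        mul_le_mul_of_nonneg_left key (by positivity)
    _ = 2 / κ * (t ^ 2)⁻¹ * (φ' t⁻¹ / φ t⁻¹ ^ 2) := by field_simp

/-- Splitting the Laplace integral at `r * t` bounds the increment of `1 / φ` by a contribution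
near the origin, controlled by the scaling condition, and a tail controlled by `u (r * t)`. -/
lemma one_div_sub_le_of_scaling {φ φ' u : ℝ → ℝ} {σ lam₀ δ C : ℝ}
    (hφpos : ∀ l : ℝ, 0 < l → 0 < φ l)
    (hφmono : ∀ s t : ℝ, 0 < s → s ≤ t → φ s ≤ φ t)
    (hφ'pos : ∀ l : ℝ, 0 < l → 0 < φ' l)
    (hupos : ∀ t : ℝ, 0 < t → 0 < u t)
    (hudec : ∀ s t : ℝ, 0 < s → s ≤ t → u t ≤ u s)
    (hlap : ∀ l : ℝ, 0 < l →
      (∫ t in Ioi (0:ℝ), Real.exp (-(l * t)) * u t) = 1 / φ l)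
    (hσ : 0 < σ) (hlam₀ : 0 < lam₀) (hδ0 : 0 < δ)
    (hA3 : ∀ x : ℝ, 1 ≤ x → ∀ l : ℝ, lam₀ ≤ l →
      φ' (l * x) ≤ σ * x ^ (-δ) * φ' l)
    (hC : 0 < C)
    (hup : ∀ t : ℝ, 0 < t → u t ≤ C * (t ^ 2)⁻¹ * (φ' t⁻¹ / (φ t⁻¹) ^ 2))
    {r t : ℝ} (hr0 : 0 < r) (hr1 : r ≤ 1) (ht : 0 < t) (htl : t ≤ 1 / lam₀) :
    1 / φ (t⁻¹ / 2) - 1 / φ t⁻¹ ≤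
      C * σ * (r ^ δ / δ) / (2 * t) * (φ' t⁻¹ / (φ t⁻¹) ^ 2) + 2 * t * u (r * t) := by
  have hti : 0 < t⁻¹ := inv_pos.2 ht
  have hrt : 0 < r * t := mul_pos hr0 ht
  have hg : 0 < φ' t⁻¹ / (φ t⁻¹) ^ 2 := div_pos (hφ'pos _ hti) (pow_pos (hφpos _ hti) 2)
  set g := φ' t⁻¹ / (φ t⁻¹) ^ 2 with hgdef
  have hint := integrableOn_sub_exp_mul_of_laplace hφpos hlap (half_pos hti) hti
  have hunion : Ioc 0 (r * t) ∪ Ioi (r * t) = Ioi (0:ℝ) := Ioc_union_Ioi_eq_Ioi hrt.le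
  have hs1 : Ioc 0 (r * t) ⊆ Ioi (0:ℝ) := fun s hs => hs.1
  have hs2 : Ioi (r * t) ⊆ Ioi (0:ℝ) := fun s hs => hrt.trans hs
  rw [← integral_sub_exp_mul_of_laplace hφpos hlap (half_pos hti) hti, ← hunion,
    setIntegral_union Ioc_disjoint_Ioi_same measurableSet_Ioi (hint.mono_set hs1)
      (hint.mono_set hs2)]
  have hpow : IntervalIntegrable (fun s : ℝ => s ^ (δ - 1)) volume 0 (r * t) :=
    intervalIntegral.intervalIntegrable_rpow' (by linarith)
  have near : ∫ s in Ioc 0 (r * t),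
      (Real.exp (-(t⁻¹ / 2 * s)) - Real.exp (-(t⁻¹ * s))) * u s ≤
      C * σ * (r ^ δ / δ) / (2 * t) * g := by
    have hval : ∫ s in Ioc 0 (r * t), (C * σ * g / (2 * t) * t ^ (-δ)) * s ^ (δ - 1) =
        C * σ * (r ^ δ / δ) / (2 * t) * g := by
      rw [integral_const_mul, ← intervalIntegral.integral_of_le hrt.le,
        integral_rpow (Or.inl (by linarith)), sub_add_cancel, Real.zero_rpow hδ0.ne', sub_zero,
        Real.mul_rpow hr0.le ht.le, Real.rpow_neg ht.le]
      have : 0 < t ^ δ := Real.rpow_pos_of_pos ht δ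
      field_simp
    rw [← hval]
    refine setIntegral_mono_on (hint.mono_set hs1)
      (((intervalIntegrable_iff_integrableOn_Ioc_of_le hrt.le).1 hpow).const_mul _)
      measurableSet_Ioc fun s hs => ?_
    have hs0 : 0 < s := hs.1
    have hsi : 0 < s⁻¹ := inv_pos.2 hs0
    have hst : s ≤ t := hs.2.trans (by nlinarith)
    have hw : Real.exp (-(t⁻¹ / 2 * s)) - Real.exp (-(t⁻¹ * s)) ≤ t⁻¹ / 2 * s := by
      have hy : 0 < t⁻¹ / 2 * s := by positivity
      have e3 : Real.exp (-(t⁻¹ * s)) =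
          Real.exp (-(t⁻¹ / 2 * s)) * Real.exp (-(t⁻¹ / 2 * s)) := by
        rw [← Real.exp_add]; ring_nf
      have e1 : Real.exp (-(t⁻¹ / 2 * s)) ≤ 1 := Real.exp_le_one_iff.2 (by linarith)
      have e2 := Real.add_one_le_exp (-(t⁻¹ / 2 * s))
      have e0 := Real.exp_pos (-(t⁻¹ / 2 * s))
      rw [e3]
      nlinarith
    have hscal : φ' s⁻¹ / φ s⁻¹ ^ 2 ≤ σ * (t ^ (-δ) * s ^ δ) * g := by
      have h := hA3 (t / s) ((one_le_div hs0).2 hst) t⁻¹ (by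
        rw [le_inv_comm₀ hlam₀ ht]; simpa using htl)
      have e : t⁻¹ * (t / s) = s⁻¹ := by field_simp
      have e' : (t / s) ^ (-δ) = t ^ (-δ) * s ^ δ := by
        rw [Real.div_rpow ht.le hs0.le, Real.rpow_neg hs0.le, div_inv_eq_mul]
      rw [e, e'] at h
      have pt := hφpos _ hti
      have hm := hφmono t⁻¹ s⁻¹ hti (inv_anti₀ hs0 hst)
      rw [hgdef, ← mul_div_assoc]
      exact div_le_div₀ ((hφ'pos _ hsi).le.trans h) h (by positivity)
        (pow_le_pow_left₀ pt.le hm 2)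
    calc (Real.exp (-(t⁻¹ / 2 * s)) - Real.exp (-(t⁻¹ * s))) * u s
        ≤ (t⁻¹ / 2 * s) * u s := mul_le_mul_of_nonneg_right hw (hupos s hs0).le
      _ ≤ (t⁻¹ / 2 * s) * (C * (s ^ 2)⁻¹ * (σ * (t ^ (-δ) * s ^ δ) * g)) := by
          refine mul_le_mul_of_nonneg_left ((hup s hs0).trans ?_) (by positivity)
          exact mul_le_mul_of_nonneg_left hscal (by positivity)
      _ = (C * σ * g / (2 * t) * t ^ (-δ)) * s ^ (δ - 1) := by
          rw [Real.rpow_sub_one hs0.ne']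
          field_simp
  have tail : ∫ s in Ioi (r * t),
      (Real.exp (-(t⁻¹ / 2 * s)) - Real.exp (-(t⁻¹ * s))) * u s ≤ 2 * t * u (r * t) := by
    have hneg : -(t⁻¹ / 2) < 0 := by linarith
    have hexp : IntegrableOn (fun s => Real.exp (-(t⁻¹ / 2) * s)) (Ioi (r * t)) :=
      integrableOn_exp_mul_Ioi hneg _
    have hle : ∫ s in Ioi (r * t),
        (Real.exp (-(t⁻¹ / 2 * s)) - Real.exp (-(t⁻¹ * s))) * u s ≤
        ∫ s in Ioi (r * t), Real.exp (-(t⁻¹ / 2) * s) * u (r * t) := by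
      refine setIntegral_mono_on (hint.mono_set hs2) (hexp.mul_const _) measurableSet_Ioi
        fun s hs => ?_
      rw [neg_mul]
      refine mul_le_mul (by linarith [Real.exp_pos (-(t⁻¹ * s))]) (hudec _ _ hrt (le_of_lt hs))
        (hupos s (hs2 hs)).le (Real.exp_pos _).le
    refine hle.trans ?_
    rw [integral_mul_const, integral_exp_mul_Ioi hneg]
    refine mul_le_mul_of_nonneg_right ?_ (hupos _ hrt).le
    have e1 : Real.exp (-(t⁻¹ / 2) * (r * t)) ≤ 1 :=
      Real.exp_le_one_iff.2 (mul_nonpos_of_nonpos_of_nonneg hneg.le hrt.le)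
    have e : -Real.exp (-(t⁻¹ / 2) * (r * t)) / -(t⁻¹ / 2) =
        2 * t * Real.exp (-(t⁻¹ / 2) * (r * t)) := by
      field_simp
    rw [e]
    exact mul_le_of_le_one_right (by positivity) e1
  exact add_le_add near tail

/-- If `φ : (0,∞) → (0,∞)` is increasing and differentiable with
`φ'` positive and decreasing, `u : (0,∞) → (0,∞)` is decreasing with
`∫₀^∞ e^{−λt} u(t) dt = 1/φ(λ)` for all `λ > 0`, and condition (A-3) holds,
then `u(t) ≍ t^{−2} φ'(t^{−1})/φ(t^{−1})²` for `0 < t ≤ 1/λ₀`. -/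
theorem stmt_4 (φ φ' u : ℝ → ℝ) (σ lam₀ δ : ℝ)
    (hφpos : ∀ l : ℝ, 0 < l → 0 < φ l)
    (hφmono : ∀ s t : ℝ, 0 < s → s ≤ t → φ s ≤ φ t)
    (hderiv : ∀ l : ℝ, 0 < l → HasDerivAt φ (φ' l) l)
    (hφ'pos : ∀ l : ℝ, 0 < l → 0 < φ' l)
    (hφ'dec : ∀ s t : ℝ, 0 < s → s ≤ t → φ' t ≤ φ' s)
    (hupos : ∀ t : ℝ, 0 < t → 0 < u t)
    (hudec : ∀ s t : ℝ, 0 < s → s ≤ t → u t ≤ u s)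
    (hlap : ∀ l : ℝ, 0 < l →
      (∫ t in Ioi (0:ℝ), Real.exp (-(l * t)) * u t) = 1 / φ l)
    (hσ : 0 < σ) (hlam₀ : 0 < lam₀) (hδ0 : 0 < δ) (hδ1 : δ ≤ 1)
    (hA3 : ∀ x : ℝ, 1 ≤ x → ∀ l : ℝ, lam₀ ≤ l →
      φ' (l * x) ≤ σ * x ^ (-δ) * φ' l) :
    ∃ c₁ : ℝ, 0 < c₁ ∧ ∃ c₂ : ℝ, 0 < c₂ ∧
      ∀ t : ℝ, 0 < t → t ≤ 1 / lam₀ →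
        c₁ * (t ^ 2)⁻¹ * (φ' t⁻¹ / (φ t⁻¹) ^ 2) ≤ u t ∧
        u t ≤ c₂ * (t ^ 2)⁻¹ * (φ' t⁻¹ / (φ t⁻¹) ^ 2) := by
  obtain ⟨C, hC, hup⟩ := potential_density_upper_bound hφpos hφmono hderiv hφ'pos hφ'dec
    hupos hudec hlap
  obtain ⟨r, hr0, hr1, hr⟩ : ∃ r : ℝ, 0 < r ∧ r ≤ 1 ∧ C * σ * (r ^ δ / δ) ≤ 1 / 2 := by
    have ha : 0 < min 1 (δ / (2 * (C * σ))) := by positivity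
    refine ⟨min 1 (δ / (2 * (C * σ))) ^ δ⁻¹, Real.rpow_pos_of_pos ha _,
      Real.rpow_le_one ha.le (min_le_left _ _) (by positivity), ?_⟩
    rw [Real.rpow_inv_rpow ha.le hδ0.ne']
    calc C * σ * (min 1 (δ / (2 * (C * σ))) / δ)
        ≤ C * σ * ((δ / (2 * (C * σ))) / δ) := by gcongr; exact min_le_right _ _
      _ = 1 / 2 := by field_simp
  have hgpos : ∀ l : ℝ, 0 < l → 0 < φ' l / φ l ^ 2 := fun l hl =>
    div_pos (hφ'pos l hl) (pow_pos (hφpos l hl) 2)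
  have hlow : ∀ t : ℝ, 0 < t → t ≤ 1 / lam₀ →
      (8 * t ^ 2)⁻¹ * (φ' t⁻¹ / φ t⁻¹ ^ 2) ≤ u (r * t) := by
    intro t ht htl
    have hti : 0 < t⁻¹ := inv_pos.2 ht
    have h1 := (one_div_sub_one_div_bounds hφpos hφmono hderiv hφ'pos hφ'dec
      (half_pos hti) (half_lt_self hti)).1
    have h2 := one_div_sub_le_of_scaling hφpos hφmono hφ'pos hupos hudec hlap hσ hlam₀ hδ0 hA3
      hC hup hr0 hr1 ht htl
    have hg := hgpos _ hti
    set g := φ' t⁻¹ / φ t⁻¹ ^ 2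
    have h3 : C * σ * (r ^ δ / δ) / (2 * t) * g ≤ (1 / 2) / (2 * t) * g := by gcongr
    have h4 : t⁻¹ / 4 * g ≤ 2 * t * u (r * t) := by
      have e1 : (t⁻¹ - t⁻¹ / 2) * g = t⁻¹ / 2 * g := by ring
      have e2 : (1 / 2) / (2 * t) * g = t⁻¹ / 4 * g := by field_simp; norm_num
      linarith
    calc (8 * t ^ 2)⁻¹ * g = (2 * t)⁻¹ * (t⁻¹ / 4 * g) := by field_simp; norm_num
      _ ≤ (2 * t)⁻¹ * (2 * t * u (r * t)) := by gcongr
      _ = u (r * t) := by field_simp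
  have hg0 := hgpos lam₀ hlam₀
  have hu0 := hupos (1 / lam₀) (by positivity)
  set A := (lam₀ / r) ^ 2 * (φ' lam₀ / φ lam₀ ^ 2) with hA
  have hApos : 0 < A := by positivity
  refine ⟨min (r ^ 2 / 8) (u (1 / lam₀) / A), by positivity, C, hC,
    fun t ht htl => ⟨?_, hup t ht⟩⟩
  have hti : 0 < t⁻¹ := inv_pos.2 ht
  have hg := hgpos _ hti
  rcases le_total t (r / lam₀) with h | h
  · have hl := hlow (t / r) (by positivity) (by
      rw [div_le_iff₀ hr0]; calc t ≤ r / lam₀ := h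
        _ = 1 / lam₀ * r := by ring)
    rw [mul_div_cancel₀ _ hr0.ne'] at hl
    have hanti : φ' t⁻¹ / φ t⁻¹ ^ 2 ≤ φ' (t / r)⁻¹ / φ (t / r)⁻¹ ^ 2 := by
      refine deriv_div_sq_antitone hφpos hφmono hφ'pos hφ'dec (by positivity) ?_
      exact inv_anti₀ ht ((le_div_iff₀ hr0).2 (mul_le_of_le_one_right ht.le hr1))
    calc min (r ^ 2 / 8) (u (1 / lam₀) / A) * (t ^ 2)⁻¹ * (φ' t⁻¹ / φ t⁻¹ ^ 2)
        ≤ r ^ 2 / 8 * (t ^ 2)⁻¹ * (φ' (t / r)⁻¹ / φ (t / r)⁻¹ ^ 2) := by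
          gcongr
          exact min_le_left _ _
      _ = (8 * (t / r) ^ 2)⁻¹ * (φ' (t / r)⁻¹ / φ (t / r)⁻¹ ^ 2) := by
          congr 1
          field_simp
      _ ≤ u t := hl
  · have hl : lam₀ ≤ t⁻¹ := by
      rw [le_inv_comm₀ hlam₀ ht]; simpa using htl
    have hanti := deriv_div_sq_antitone hφpos hφmono hφ'pos hφ'dec hlam₀ hl
    have hsq : (t ^ 2)⁻¹ ≤ (lam₀ / r) ^ 2 := by
      rw [← inv_pow]
      refine pow_le_pow_left₀ hti.le ?_ 2
      rw [← inv_div]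
      exact inv_anti₀ (by positivity) h
    calc min (r ^ 2 / 8) (u (1 / lam₀) / A) * (t ^ 2)⁻¹ * (φ' t⁻¹ / φ t⁻¹ ^ 2)
        ≤ u (1 / lam₀) / A * (lam₀ / r) ^ 2 * (φ' lam₀ / φ lam₀ ^ 2) := by
          gcongr
          exact min_le_right _ _
      _ = u (1 / lam₀) := by
          rw [mul_assoc, ← hA, div_mul_cancel₀ _ hApos.ne']
      _ ≤ u t := hudec _ _ ht htl
end

section
/- Let φ : (0,∞) → (0,∞) be differentiable and suppose there exist a constant θ ≥ 0 and a Borel measure ν on (0,∞) with ∫_{(0,∞)} (1 ∧ t) ν(dt) < ∞ such that λ/φ(λ) = θ + ∫_{(0,∞)} (1 − e^{−λt}) ν(dt) for all λ > 0. Then the function η₂(λ) = λ² φ'(λ)/φ(λ)² is increasing on (0,∞); if moreover φ is increasing, then the function η₁(λ) = λ² φ'(λ) is also increasing on (0,∞). -/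
open MeasureTheory Real Set

/-- `1 - e^{-lt}` is integrable against a Lévy measure of a subordinator. -/
lemma integrableOn_one_sub_exp_neg_mul {ν : Measure ℝ}
    (hν : ∫⁻ t in Ioi (0:ℝ), ENNReal.ofReal (min 1 t) ∂ν < ⊤) {l : ℝ} (hl : 0 < l) :
    IntegrableOn (fun t => 1 - Real.exp (-(l * t))) (Ioi 0) ν := by
  have hmin : IntegrableOn (fun t : ℝ => min 1 t) (Ioi 0) ν := by
    refine ⟨by fun_prop, ?_⟩
    rw [hasFiniteIntegral_iff_ofReal]
    · exact hν
    · filter_upwards [ae_restrict_mem measurableSet_Ioi] with t ht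
      exact le_min zero_le_one (le_of_lt ht)
  refine (hmin.const_mul (max 1 l)).mono' (by fun_prop) ?_
  filter_upwards [ae_restrict_mem measurableSet_Ioi] with t ht
  have ht : 0 < t := ht
  have hlt : 0 < l * t := mul_pos hl ht
  have hle : Real.exp (-(l * t)) ≤ 1 := Real.exp_le_one_iff.2 (by linarith)
  rw [Real.norm_of_nonneg (by linarith)]
  rcases le_total 1 t with h | h
  · rw [min_eq_left h]
    linarith [le_max_left 1 l, Real.exp_pos (-(l * t))]
  · rw [min_eq_right h]
    nlinarith [le_max_right 1 l, Real.add_one_le_exp (-(l * t))]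

/-- The function `l ↦ θ + ∫ (1 - e^{-lt}) ν(dt)` is concave on `(0,∞)`. -/
lemma concaveOn_add_integral_one_sub_exp {ν : Measure ℝ} (θ : ℝ)
    (hν : ∫⁻ t in Ioi (0:ℝ), ENNReal.ofReal (min 1 t) ∂ν < ⊤) :
    ConcaveOn ℝ (Ioi 0)
      (fun l : ℝ => θ + ∫ t in Ioi (0:ℝ), (1 - Real.exp (-(l * t))) ∂ν) := by
  refine (concaveOn_const θ (convex_Ioi 0)).add ⟨convex_Ioi 0, ?_⟩
  intro x hx y hy a b ha hb hab
  have hxy : 0 < a • x + b • y := convex_Ioi 0 hx hy ha hb hab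
  have hix := integrableOn_one_sub_exp_neg_mul hν hx
  have hiy := integrableOn_one_sub_exp_neg_mul hν hy
  simp only [smul_eq_mul] at hxy ⊢
  rw [← integral_const_mul, ← integral_const_mul,
    ← integral_add (hix.const_mul a) (hiy.const_mul b)]
  refine integral_mono ((hix.const_mul a).add (hiy.const_mul b))
    (integrableOn_one_sub_exp_neg_mul hν hxy) fun t => ?_
  have h := convexOn_exp.2 (mem_univ (-(x * t))) (mem_univ (-(y * t))) ha hb hab
  simp only [smul_eq_mul] at h
  rw [show a * -(x * t) + b * -(y * t) = -((a * x + b * y) * t) by ring] at h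
  simp only
  linarith

/-- The intercept at `0` of the tangent line of a concave function on `(0,∞)` is increasing. -/
lemma ConcaveOn.sub_mul_deriv_le_sub_mul_deriv {f : ℝ → ℝ} (hf : ConcaveOn ℝ (Ioi 0) f)
    {s t ds dt : ℝ} (hs : 0 < s) (hst : s < t)
    (hds : HasDerivAt f ds s) (hdt : HasDerivAt f dt t) :
    f s - s * ds ≤ f t - t * dt := by
  have ht : 0 < t := hs.trans hst
  have h₁ := hf.slope_le_of_hasDerivAt hs ht hst hds
  have h₂ := hf.le_slope_of_hasDerivAt hs ht hst hdt
  have h₃ : dt ≤ ds := h₂.trans h₁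
  rw [slope_def_field, le_div_iff₀ (sub_pos.2 hst)] at h₂
  nlinarith

/-- If `φ : (0,∞) → (0,∞)` is differentiable and
`λ/φ(λ) = θ + ∫_{(0,∞)} (1 − e^{−λt}) ν(dt)` with `θ ≥ 0` and a Borel measure
`ν` on `(0,∞)` with `∫ (1 ∧ t) ν(dt) < ∞`, then `η₂(λ) = λ² φ'(λ)/φ(λ)²` is
increasing on `(0,∞)`, and if moreover `φ` is increasing, then
`η₁(λ) = λ² φ'(λ)` is increasing on `(0,∞)` as well. -/
theorem stmt_6 (φ φ' : ℝ → ℝ) (θ : ℝ) (ν : Measure ℝ)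
    (hφpos : ∀ l : ℝ, 0 < l → 0 < φ l)
    (hderiv : ∀ l : ℝ, 0 < l → HasDerivAt φ (φ' l) l)
    (hθ : 0 ≤ θ)
    (hν : ∫⁻ t in Ioi (0:ℝ), ENNReal.ofReal (min 1 t) ∂ν < ⊤)
    (hrep : ∀ l : ℝ, 0 < l →
      l / φ l = θ + ∫ t in Ioi (0:ℝ), (1 - Real.exp (-(l * t))) ∂ν) :
    (∀ s t : ℝ, 0 < s → s ≤ t →
        s ^ 2 * φ' s / (φ s) ^ 2 ≤ t ^ 2 * φ' t / (φ t) ^ 2) ∧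
    ((∀ s t : ℝ, 0 < s → s ≤ t → φ s ≤ φ t) →
      ∀ s t : ℝ, 0 < s → s ≤ t → s ^ 2 * φ' s ≤ t ^ 2 * φ' t) := by
  have hconc : ConcaveOn ℝ (Ioi 0) (fun l => l / φ l) :=
    (concaveOn_add_integral_one_sub_exp θ hν).congr fun l hl => (hrep l hl).symm
  have hd : ∀ l : ℝ, 0 < l →
      HasDerivAt (fun l => l / φ l) ((1 * φ l - l * φ' l) / φ l ^ 2) l :=
    fun l hl => (hasDerivAt_id' l).fun_div (hderiv l hl) (hφpos l hl).ne'
  have hη : ∀ l : ℝ, 0 < l →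
      l ^ 2 * φ' l / φ l ^ 2 = l / φ l - l * ((1 * φ l - l * φ' l) / φ l ^ 2) := by
    intro l hl
    have := (hφpos l hl).ne'
    field_simp
    ring
  have hη₂ : ∀ s t : ℝ, 0 < s → s ≤ t →
      s ^ 2 * φ' s / (φ s) ^ 2 ≤ t ^ 2 * φ' t / (φ t) ^ 2 := by
    intro s t hs hst
    rcases hst.eq_or_lt with rfl | hlt
    · exact le_rfl
    · rw [hη s hs, hη t (hs.trans hlt)]
      exact hconc.sub_mul_deriv_le_sub_mul_deriv hs hlt (hd s hs) (hd t (hs.trans hlt))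
  refine ⟨hη₂, fun hmono s t hs hst => ?_⟩
  have ht : 0 < t := hs.trans_le hst
  have hderiv_nonneg : 0 ≤ φ' s := by
    have hm : MonotoneOn φ (Ioi 0) := fun x hx y _ hxy => hmono x y hx hxy
    have h := hm.derivWithin_nonneg (x := s)
    rwa [(hderiv s hs).hasDerivWithinAt.derivWithin (isOpen_Ioi.uniqueDiffWithinAt hs)] at h
  have hmul : ∀ l : ℝ, 0 < l → l ^ 2 * φ' l = l ^ 2 * φ' l / φ l ^ 2 * φ l ^ 2 :=
    fun l hl => (div_mul_cancel₀ _ (pow_pos (hφpos l hl) 2).ne').symm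
  have h0 : 0 ≤ s ^ 2 * φ' s / φ s ^ 2 := by positivity
  rw [hmul s hs, hmul t ht]
  exact mul_le_mul (hη₂ s t hs hst)
    (pow_le_pow_left₀ (hφpos s hs).le (hmono s t hs hst) 2) (sq_nonneg _)
    (h0.trans (hη₂ s t hs hst))
end

section
/- Let d ≥ 1 be an integer. Let μ : (0,∞) → (0,∞) be decreasing with ∫₀^∞ (1 ∧ t) μ(t) dt < ∞, define φ(λ) = ∫₀^∞ (1 − e^{−λt}) μ(t) dt, and assume φ' is decreasing, λ ↦ λ² φ'(λ) is increasing on (0,∞), and there exist σ > 0, λ₀ > 0 and δ ∈ (0,1] such that φ'(λx) ≤ σ x^{−δ} φ'(λ) for all x ≥ 1 and λ ≥ λ₀. When d ≤ 2, assume additionally that d + 2δ − 2 > 0 and there exist σ' > 0 and δ' with 1 − d/2 < δ' < min(1 + d/2, 2δ + (d−2)/2) such that φ'(λx) ≥ σ' x^{−δ'} φ'(λ) for all x ≥ 1 and λ ≥ λ₀. Then the function j(r) = ∫₀^∞ (4πt)^{−d/2} exp(−r²/(4t)) μ(t) dt satisfies j(r) ≍ r^{−d−2} φ'(r^{−2})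 as r → 0+, i.e. there exist constants c₁, c₂ > 0 and r₀ ∈ (0,1) with c₁ r^{−d−2} φ'(r^{−2}) ≤ j(r) ≤ c₂ r^{−d−2} φ'(r^{−2}) for all 0 < r < r₀. -/
open MeasureTheory Real Set

/-- A nonnegative function on `(0, ∞)` bounded below by `c` on `(a / 2, a]` has integral at least
`c * (a / 2)`. -/
theorem const_mul_half_le_integral_Ioi {f : ℝ → ℝ} {a c : ℝ} (ha : 0 < a)
    (hf : IntegrableOn f (Ioi 0)) (hf0 : ∀ t, 0 < t → 0 ≤ f t)
    (hc : ∀ t ∈ Ioc (a / 2) a, c ≤ f t) : c * (a / 2) ≤ ∫ t in Ioi (0 : ℝ), f t := by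
  have hsub : Ioc (a / 2) a ⊆ Ioi (0 : ℝ) := fun t ht => (half_pos ha).trans ht.1
  calc c * (a / 2) = ∫ _ in Ioc (a / 2) a, c := by
        rw [setIntegral_const, Real.volume_real_Ioc_of_le (by linarith), smul_eq_mul]; ring
    _ ≤ ∫ t in Ioc (a / 2) a, f t :=
        setIntegral_mono_on (integrableOn_const (by simp)) (hf.mono_set hsub)
          measurableSet_Ioc hc
    _ ≤ ∫ t in Ioi (0 : ℝ), f t :=
        setIntegral_mono_set hf
          ((ae_restrict_iff' measurableSet_Ioi).2 (.of_forall hf0)) hsub.eventuallyLE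

theorem integrableOn_mul_exp_neg_mul {l : ℝ} (hl : 0 < l) :
    IntegrableOn (fun t : ℝ => t * exp (-(l * t))) (Ioi 0) ∧
      ∫ t in Ioi (0 : ℝ), t * exp (-(l * t)) = (l ^ 2)⁻¹ := by
  have h : ∫ t in Ioi (0 : ℝ), t * exp (-(l * t)) = (l ^ 2)⁻¹ := by
    have := integral_rpow_mul_exp_neg_mul_Ioi (a := 2) (by norm_num) hl
    norm_num at this
    simpa using this
  refine ⟨.of_integral_ne_zero ?_, h⟩
  rw [h]; positivity

/-- Powers are dominated by exponentials, in the form needed for the heat kernel. -/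
theorem exists_rpow_mul_exp_neg_le (p : ℝ) :
    ∃ K : ℝ, 0 < K ∧ ∀ x : ℝ, 1 ≤ x → x ^ p * exp (-(x / 4)) ≤ K := by
  set n := ⌈p⌉₊
  refine ⟨4 ^ n * n.factorial, by positivity, fun x hx => ?_⟩
  have h1 : x ^ p ≤ x ^ n := by
    rw [← rpow_natCast]
    exact rpow_le_rpow_of_exponent_le hx (Nat.le_ceil p)
  have h2 := pow_div_factorial_le_exp (x := x / 4) (by linarith) n
  rw [div_pow, div_div, div_le_iff₀ (by positivity)] at h2
  rw [exp_neg, ← div_eq_mul_inv, div_le_iff₀ (exp_pos _)]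
  linarith

theorem exists_rpow_le {δ c : ℝ} (hδ : 0 < δ) (hc : 0 < c) :
    ∃ κ : ℝ, 0 < κ ∧ κ ≤ 1 ∧ κ ^ δ ≤ c := by
  refine ⟨min 1 (c ^ δ⁻¹), by positivity, min_le_left _ _, ?_⟩
  calc (min 1 (c ^ δ⁻¹)) ^ δ ≤ (c ^ δ⁻¹) ^ δ :=
        rpow_le_rpow (by positivity) (min_le_right _ _) hδ.le
    _ = c := rpow_inv_rpow hc.le hδ.ne'

section LevyDensity

variable {μ φ φ' : ℝ → ℝ}

theorem aestronglyMeasurable_of_antitone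
    (hμdec : ∀ s t : ℝ, 0 < s → s ≤ t → μ t ≤ μ s) :
    AEStronglyMeasurable μ (volume.restrict (Ioi 0)) :=
  (aemeasurable_restrict_of_antitoneOn measurableSet_Ioi
    fun _ hs _ _ hst => hμdec _ _ hs hst).aestronglyMeasurable

/-- A multiple of `μ` by a factor that is `O(min 1 t)` is integrable. -/
theorem integrableOn_mul_of_le_min {g : ℝ → ℝ} {C : ℝ} (hμpos : ∀ t : ℝ, 0 < t → 0 < μ t)
    (hμdec : ∀ s t : ℝ, 0 < s → s ≤ t → μ t ≤ μ s)
    (hμint : IntegrableOn (fun t => min 1 t * μ t) (Ioi 0)) (hg : Measurable g)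
    (hgC : ∀ t, 0 < t → |g t| ≤ C * min 1 t) :
    IntegrableOn (fun t => g t * μ t) (Ioi 0) := by
  refine (hμint.const_mul C).mono' (hg.aestronglyMeasurable.mul
    (aestronglyMeasurable_of_antitone hμdec)) ?_
  refine (ae_restrict_iff' measurableSet_Ioi).2 (.of_forall fun t ht => ?_)
  rw [norm_mul, norm_of_nonneg (hμpos t ht).le, ← mul_assoc]
  exact mul_le_mul_of_nonneg_right (hgC t ht) (hμpos t ht).le

theorem mul_exp_neg_mul_le_min {l t : ℝ} (hl : 0 < l) (ht : 0 < t) :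
    t * exp (-(l * t)) ≤ max 1 l⁻¹ * min 1 t := by
  have he : exp (-(l * t)) ≤ 1 := exp_le_one_iff.2 (by nlinarith [mul_pos hl ht])
  have h1 : t * exp (-(l * t)) ≤ t := by nlinarith
  have h2 : t * exp (-(l * t)) ≤ l⁻¹ := by
    rw [exp_neg, ← div_eq_mul_inv, div_le_iff₀ (exp_pos _), inv_mul_eq_div, le_div_iff₀ hl]
    linarith [add_one_le_exp (l * t)]
  rcases le_total 1 t with h | h
  · rw [min_eq_left h, mul_one]
    exact h2.trans (le_max_right _ _)
  · rw [min_eq_right h]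
    nlinarith [le_max_left 1 l⁻¹]

/-- Differentiation under the integral sign in the Laplace exponent. -/
theorem laplaceExponent_deriv_eq (hμpos : ∀ t : ℝ, 0 < t → 0 < μ t)
    (hμdec : ∀ s t : ℝ, 0 < s → s ≤ t → μ t ≤ μ s)
    (hμint : IntegrableOn (fun t => min 1 t * μ t) (Ioi 0))
    (hφ : ∀ l : ℝ, 0 < l → φ l = ∫ t in Ioi (0 : ℝ), (1 - exp (-(l * t))) * μ t)
    (hderiv : ∀ l : ℝ, 0 < l → HasDerivAt φ (φ' l) l) {l : ℝ} (hl : 0 < l) :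
    IntegrableOn (fun t => t * exp (-(l * t)) * μ t) (Ioi 0) ∧
      φ' l = ∫ t in Ioi (0 : ℝ), t * exp (-(l * t)) * μ t := by
  have hmeas := aestronglyMeasurable_of_antitone hμdec
  have hint (k : ℝ) (hk : 0 < k) : IntegrableOn (fun t => t * exp (-(k * t)) * μ t) (Ioi 0) := by
    refine integrableOn_mul_of_le_min hμpos hμdec hμint (C := max 1 k⁻¹) (by fun_prop)
      fun t ht => ?_
    rw [abs_of_nonneg (by positivity)]
    exact mul_exp_neg_mul_le_min hk ht
  have hint0 : IntegrableOn (fun t => (1 - exp (-(l * t))) * μ t) (Ioi 0) := by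
    refine integrableOn_mul_of_le_min hμpos hμdec hμint (C := max 1 l) (by fun_prop)
      fun t ht => ?_
    have hlt : 0 < l * t := mul_pos hl ht
    have he : exp (-(l * t)) ≤ 1 := exp_le_one_iff.2 (by linarith)
    rw [abs_of_nonneg (by linarith)]
    rcases le_total 1 t with h | h
    · rw [min_eq_left h]
      linarith [le_max_left 1 l, exp_pos (-(l * t))]
    · rw [min_eq_right h]
      nlinarith [le_max_right 1 l, add_one_le_exp (-(l * t))]
  have key := hasDerivAt_integral_of_dominated_loc_of_deriv_le
    (μ := volume.restrict (Ioi (0 : ℝ)))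
    (F := fun k t => (1 - exp (-(k * t))) * μ t) (F' := fun k t => t * exp (-(k * t)) * μ t)
    (bound := fun t => t * exp (-(l / 2 * t)) * μ t) (Ioi_mem_nhds (half_lt_self hl))
    (.of_forall fun k => (Measurable.aestronglyMeasurable (by fun_prop)).mul hmeas) hint0
    (hint l hl).aestronglyMeasurable
    ((ae_restrict_iff' measurableSet_Ioi).2 (.of_forall fun t ht k hk => ?_))
    (hint _ (half_pos hl)) (.of_forall fun t k _ => ?_)
  · refine ⟨key.1, (hderiv l hl).unique (key.2.congr_of_eventuallyEq ?_)⟩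
    filter_upwards [Ioi_mem_nhds hl] with k hk using hφ k hk
  · have ht' : 0 < t := ht
    have hμt := hμpos t ht
    have hk' : l / 2 < k := hk
    rw [norm_of_nonneg (by positivity)]
    gcongr
  · have h : HasDerivAt (fun k : ℝ => -(k * t)) (-t) k := by
      exact (hasDerivAt_mul_const t).fun_neg
    convert! (h.exp.const_sub 1).mul_const (μ t) using 1
    ring

/-- Pointwise upper bound for the decreasing density in terms of the derivative of the Laplace exponent. -/
theorem density_le (hμpos : ∀ t : ℝ, 0 < t → 0 < μ t)
    (hμdec : ∀ s t : ℝ, 0 < s → s ≤ t → μ t ≤ μ s)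
    (hrep : ∀ l : ℝ, 0 < l → IntegrableOn (fun t => t * exp (-(l * t)) * μ t) (Ioi 0) ∧
      φ' l = ∫ t in Ioi (0 : ℝ), t * exp (-(l * t)) * μ t) {a : ℝ} (ha : 0 < a) :
    μ a ≤ 4 * exp 1 * (a ^ 2)⁻¹ * φ' a⁻¹ := by
  obtain ⟨hi, he⟩ := hrep a⁻¹ (inv_pos.2 ha)
  have h := const_mul_half_le_integral_Ioi (c := a / 2 * exp (-1) * μ a) ha hi
    (fun t ht => by have := hμpos t ht; positivity) fun t ht => by
      have ht0 : 0 < t := (half_pos ha).trans ht.1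
      have hμt := hμpos t ht0
      have hμa := hμpos a ha
      have hat : a⁻¹ * t ≤ 1 := by rw [inv_mul_le_iff₀ ha]; linarith [ht.2]
      have h1 := hμdec t a ht0 ht.2
      have h2 := ht.1.le
      gcongr
  rw [← he] at h
  calc μ a = 4 * exp 1 * (a ^ 2)⁻¹ * (a / 2 * exp (-1) * μ a * (a / 2)) := by
        rw [exp_neg]; field_simp; norm_num
    _ ≤ _ := by gcongr

/-- Pointwise lower bound for the decreasing density near zero in terms of the derivative of the Laplace exponent. -/
theorem exists_le_density {σ lam₀ δ : ℝ} (hμpos : ∀ t : ℝ, 0 < t → 0 < μ t)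
    (hμdec : ∀ s t : ℝ, 0 < s → s ≤ t → μ t ≤ μ s)
    (hrep : ∀ l : ℝ, 0 < l → IntegrableOn (fun t => t * exp (-(l * t)) * μ t) (Ioi 0) ∧
      φ' l = ∫ t in Ioi (0 : ℝ), t * exp (-(l * t)) * μ t)
    (hφ'pos : ∀ l : ℝ, 0 < l → 0 < φ' l)
    (hφ'dec : ∀ s t : ℝ, 0 < s → s ≤ t → φ' t ≤ φ' s)
    (hσ : 0 < σ) (hlam₀ : 0 < lam₀) (hδ0 : 0 < δ)
    (hA3 : ∀ x : ℝ, 1 ≤ x → ∀ l : ℝ, lam₀ ≤ l → φ' (l * x) ≤ σ * x ^ (-δ) * φ' l) :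
    ∃ c : ℝ, 0 < c ∧ ∃ a₀ : ℝ, 0 < a₀ ∧ ∀ a : ℝ, 0 < a → a ≤ a₀ →
      c * (a ^ 2)⁻¹ * φ' a⁻¹ ≤ μ a := by
  obtain ⟨κ, hκ, hκ1, hκδ⟩ := exists_rpow_le hδ0 (c := (2 * exp 1 * σ)⁻¹) (by positivity)
  refine ⟨κ ^ 2 / 2, by positivity, κ / lam₀, by positivity, fun a ha haa => ?_⟩
  have hl : 0 < κ / a := by positivity
  have hll : lam₀ ≤ κ / a := by
    rw [le_div_iff₀ ha]; rw [le_div_iff₀ hlam₀] at haa; linarith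
  obtain ⟨hi, he⟩ := hrep _ hl
  obtain ⟨hi', he'⟩ := hrep a⁻¹ (inv_pos.2 ha)
  obtain ⟨hg, hge⟩ := integrableOn_mul_exp_neg_mul hl
  have hsplit : φ' (κ / a) ≤ exp 1 * φ' a⁻¹ + μ a * ((κ / a) ^ 2)⁻¹ := by
    rw [he, he', ← hge, ← integral_const_mul, ← integral_const_mul,
      ← integral_add (hi'.const_mul _) (hg.const_mul _)]
    refine setIntegral_mono_on hi ((hi'.const_mul _).add (hg.const_mul _)) measurableSet_Ioi
      fun t (ht : 0 < t) => ?_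
    have hμt := hμpos t ht
    have hμa := hμpos a ha
    have hnn : 0 ≤ κ / a * t := by positivity
    rcases le_total t a with h | h
    · have h1 : exp (-(κ / a * t)) ≤ exp 1 * exp (-(a⁻¹ * t)) := by
        rw [← exp_add, exp_le_exp]
        have : a⁻¹ * t ≤ 1 := by rwa [inv_mul_le_iff₀ ha, mul_one]
        linarith
      calc t * exp (-(κ / a * t)) * μ t ≤ t * (exp 1 * exp (-(a⁻¹ * t))) * μ t := by gcongr
        _ = exp 1 * (t * exp (-(a⁻¹ * t)) * μ t) := by ring
        _ ≤ _ := le_add_of_nonneg_right (by positivity)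
    · calc t * exp (-(κ / a * t)) * μ t ≤ t * exp (-(κ / a * t)) * μ a := by
            gcongr; exact hμdec a t ha h
        _ = μ a * (t * exp (-(κ / a * t))) := by ring
        _ ≤ _ := le_add_of_nonneg_left (by positivity)
  have hpos := hφ'pos _ hl
  have h3 : exp 1 * φ' a⁻¹ ≤ φ' (κ / a) / 2 := by
    have := hA3 κ⁻¹ ((one_le_inv₀ hκ).2 hκ1) _ hll
    rw [show κ / a * κ⁻¹ = a⁻¹ by field_simp, inv_rpow hκ.le, rpow_neg hκ.le, inv_inv] at this
    calc exp 1 * φ' a⁻¹ ≤ exp 1 * (σ * κ ^ δ * φ' (κ / a)) := by gcongr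
      _ ≤ exp 1 * (σ * (2 * exp 1 * σ)⁻¹ * φ' (κ / a)) := by gcongr
      _ = φ' (κ / a) / 2 := by field_simp
  have h4 : φ' a⁻¹ ≤ φ' (κ / a) :=
    hφ'dec _ _ hl (by rw [div_eq_mul_inv]; exact mul_le_of_le_one_left (by positivity) hκ1)
  calc κ ^ 2 / 2 * (a ^ 2)⁻¹ * φ' a⁻¹ = (κ / a) ^ 2 * (φ' a⁻¹ / 2) := by ring
    _ ≤ (κ / a) ^ 2 * (μ a * ((κ / a) ^ 2)⁻¹) := by gcongr; linarith
    _ = μ a := by field_simp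

/-- Pointwise bound for the heat kernel average of `μ`, split at the scales `R` and `lam₀⁻¹`. -/
theorem kernel_mul_density_le {A K q σ' δ' lam₀ R t : ℝ} (hq : 0 ≤ q)
    (hμpos : ∀ t : ℝ, 0 < t → 0 < μ t)
    (hA : 0 < A) (hup : ∀ a : ℝ, 0 < a → μ a ≤ A * (a ^ 2)⁻¹ * φ' a⁻¹)
    (hK : ∀ x : ℝ, 1 ≤ x → x ^ (q + 2) * exp (-(x / 4)) ≤ K)
    (hφ'pos : ∀ l : ℝ, 0 < l → 0 < φ' l)
    (hφ'dec : ∀ s t : ℝ, 0 < s → s ≤ t → φ' t ≤ φ' s)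
    (hlam₀ : 0 < lam₀) (hσ' : 0 < σ')
    (hlow : ∀ x : ℝ, 1 ≤ x → ∀ l : ℝ, lam₀ ≤ l → σ' * x ^ (-δ') * φ' l ≤ φ' (l * x))
    (hR : 0 < R) (ht : 0 < t) :
    t ^ (-q) * exp (-(R / (4 * t))) * μ t ≤
      (Ioc 0 R).indicator (fun _ => A * K * R ^ (-q - 2) * φ' R⁻¹) t +
      (Ioi R).indicator (fun s => A * σ'⁻¹ * R ^ (-δ') * φ' R⁻¹ * s ^ (δ' - q - 2)) t +
      (Ioi lam₀⁻¹).indicator (fun s => lam₀ ^ q * μ s) t := by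
  have hΦ := hφ'pos _ (inv_pos.2 hR)
  have hΦt := hφ'pos _ (inv_pos.2 ht)
  have hμt := hμpos t ht
  have hK0 : 0 ≤ K := (by positivity : (0 : ℝ) ≤ 1 ^ (q + 2) * exp (-(1 / 4))).trans (hK 1 le_rfl)
  have i1 : 0 ≤ (Ioc 0 R).indicator (fun _ => A * K * R ^ (-q - 2) * φ' R⁻¹) t :=
    indicator_nonneg (fun _ _ => by positivity) _
  have i2 : 0 ≤ (Ioi R).indicator
      (fun s => A * σ'⁻¹ * R ^ (-δ') * φ' R⁻¹ * s ^ (δ' - q - 2)) t :=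
    indicator_nonneg (fun s hs => by have : 0 < s := hR.trans hs; positivity) _
  have i3 : 0 ≤ (Ioi lam₀⁻¹).indicator (fun s => lam₀ ^ q * μ s) t :=
    indicator_nonneg (fun s hs => by
      have := hμpos s ((inv_pos.2 hlam₀).trans hs); positivity) _
  have he : exp (-(R / (4 * t))) ≤ 1 := exp_le_one_iff.2 (by
    have : 0 ≤ R / (4 * t) := by positivity
    linarith)
  have htpow : t ^ (-q) * (t ^ 2)⁻¹ = t ^ (-q - 2) := by
    rw [rpow_sub ht, rpow_two, div_eq_mul_inv]
  rcases le_or_gt t R with h | h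
  · have hx : 1 ≤ R / t := (one_le_div ht).2 h
    have h1 : t ^ (-q - 2) * exp (-(R / (4 * t))) ≤ K * R ^ (-q - 2) := by
      have := hK _ hx
      rw [div_rpow hR.le ht.le, div_div, mul_comm t 4] at this
      calc t ^ (-q - 2) * exp (-(R / (4 * t)))
          = R ^ (q + 2) / t ^ (q + 2) * exp (-(R / (4 * t))) * R ^ (-q - 2) := by
            rw [show -q - 2 = -(q + 2) by ring, rpow_neg ht.le, rpow_neg hR.le]
            field_simp
        _ ≤ _ := by gcongr
    have h2 : φ' t⁻¹ ≤ φ' R⁻¹ := hφ'dec _ _ (inv_pos.2 hR) (inv_anti₀ ht h)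
    have h3 : t ^ (-q) * exp (-(R / (4 * t))) * μ t ≤ A * K * R ^ (-q - 2) * φ' R⁻¹ :=
      calc t ^ (-q) * exp (-(R / (4 * t))) * μ t
          ≤ t ^ (-q) * exp (-(R / (4 * t))) * (A * (t ^ 2)⁻¹ * φ' R⁻¹) := by
            gcongr
            exact (hup t ht).trans (by gcongr)
        _ = A * (t ^ (-q - 2) * exp (-(R / (4 * t)))) * φ' R⁻¹ := by rw [← htpow]; ring
        _ ≤ A * (K * R ^ (-q - 2)) * φ' R⁻¹ := by gcongr
        _ = _ := by ring
    rw [indicator_of_mem (show t ∈ Ioc 0 R from ⟨ht, h⟩)] at i1 ⊢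
    linarith
  rcases le_or_gt t lam₀⁻¹ with h' | h'
  · have hx : 1 ≤ t / R := (one_le_div hR).2 h.le
    have h1 := hlow _ hx t⁻¹ (by rwa [le_inv_comm₀ hlam₀ ht])
    rw [show t⁻¹ * (t / R) = R⁻¹ by field_simp] at h1
    have h2 : φ' t⁻¹ ≤ σ'⁻¹ * (t / R) ^ δ' * φ' R⁻¹ := by
      calc φ' t⁻¹ = σ'⁻¹ * (t / R) ^ δ' * (σ' * (t / R) ^ (-δ') * φ' t⁻¹) := by
            rw [rpow_neg (by positivity)]; field_simp
        _ ≤ _ := by gcongr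
    have h3 : t ^ (-q) * exp (-(R / (4 * t))) * μ t ≤
        A * σ'⁻¹ * R ^ (-δ') * φ' R⁻¹ * t ^ (δ' - q - 2) :=
      calc t ^ (-q) * exp (-(R / (4 * t))) * μ t
          ≤ t ^ (-q) * 1 * (A * (t ^ 2)⁻¹ * (σ'⁻¹ * (t / R) ^ δ' * φ' R⁻¹)) := by
            gcongr
            exact (hup t ht).trans (by gcongr)
        _ = A * σ'⁻¹ * (t / R) ^ δ' * φ' R⁻¹ * t ^ (-q - 2) := by rw [← htpow]; ring
        _ = _ := by
            rw [div_rpow ht.le hR.le, rpow_neg hR.le,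
              show δ' - q - 2 = δ' + (-q - 2) by ring, rpow_add ht]
            ring
    rw [indicator_of_mem (show t ∈ Ioi R from h)] at i2 ⊢
    linarith
  · have h1 : t ^ (-q) * exp (-(R / (4 * t))) * μ t ≤ lam₀ ^ q * μ t := by
      have : t ^ (-q) ≤ lam₀ ^ q := by
        rw [rpow_neg ht.le, ← inv_rpow ht.le]
        exact rpow_le_rpow (by positivity) (inv_le_of_inv_le₀ hlam₀ h'.le) hq
      calc t ^ (-q) * exp (-(R / (4 * t))) * μ t ≤ lam₀ ^ q * 1 * μ t := by gcongr
        _ = _ := by ring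
    rw [indicator_of_mem (show t ∈ Ioi lam₀⁻¹ from h')] at i3 ⊢
    linarith

theorem exists_integral_kernel_mul_density_le {A q σ' δ' lam₀ : ℝ} (hq : 0 ≤ q)
    (hμpos : ∀ t : ℝ, 0 < t → 0 < μ t)
    (hμdec : ∀ s t : ℝ, 0 < s → s ≤ t → μ t ≤ μ s)
    (hμint : IntegrableOn (fun t => min 1 t * μ t) (Ioi 0))
    (hA : 0 < A) (hup : ∀ a : ℝ, 0 < a → μ a ≤ A * (a ^ 2)⁻¹ * φ' a⁻¹)
    (hφ'pos : ∀ l : ℝ, 0 < l → 0 < φ' l)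
    (hφ'dec : ∀ s t : ℝ, 0 < s → s ≤ t → φ' t ≤ φ' s)
    (hlam₀ : 0 < lam₀) (hσ' : 0 < σ') (hδ' : δ' < q + 1)
    (hlow : ∀ x : ℝ, 1 ≤ x → ∀ l : ℝ, lam₀ ≤ l → σ' * x ^ (-δ') * φ' l ≤ φ' (l * x)) :
    ∃ c : ℝ, 0 < c ∧ ∀ R : ℝ, 0 < R → R ≤ lam₀⁻¹ →
      IntegrableOn (fun t => t ^ (-q) * exp (-(R / (4 * t))) * μ t) (Ioi 0) ∧
      ∫ t in Ioi (0 : ℝ), t ^ (-q) * exp (-(R / (4 * t))) * μ t ≤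
        c * R ^ (-q - 1) * φ' R⁻¹ := by
  obtain ⟨K, hK0, hK⟩ := exists_rpow_mul_exp_neg_le (q + 2)
  have hT : 0 < lam₀⁻¹ := inv_pos.2 hlam₀
  have hμT : IntegrableOn μ (Ioi lam₀⁻¹) := by
    refine (hμint.mono_set (Ioi_subset_Ioi hT.le) |>.const_mul (min 1 lam₀⁻¹)⁻¹).mono'
      ((aestronglyMeasurable_of_antitone hμdec).mono_measure
        (Measure.restrict_mono (Ioi_subset_Ioi hT.le) le_rfl)) ?_
    refine (ae_restrict_iff' measurableSet_Ioi).2 (.of_forall fun t ht => ?_)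
    have ht' : lam₀⁻¹ < t := ht
    have hμt := hμpos t (hT.trans ht)
    rw [norm_of_nonneg hμt.le, ← mul_assoc]
    refine le_mul_of_one_le_left hμt.le ?_
    rw [inv_mul_eq_div, one_le_div (by positivity)]
    gcongr
  set M := ∫ t in Ioi lam₀⁻¹, μ t with hM
  have hM0 : 0 ≤ M := setIntegral_nonneg measurableSet_Ioi fun t ht => (hμpos t (hT.trans ht)).le
  have hΦ0 := hφ'pos _ hlam₀
  have hgap : 0 < q + 1 - δ' := by linarith
  refine ⟨A * K + A * σ'⁻¹ * (q + 1 - δ')⁻¹ + lam₀⁻¹ * M * (σ' * φ' lam₀)⁻¹, by positivity,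
    fun R hR hRT => ?_⟩
  have hΦ := hφ'pos _ (inv_pos.2 hR)
  have hp : δ' - q - 2 < -1 := by linarith
  have j1 : IntegrableOn ((Ioc 0 R).indicator fun _ => A * K * R ^ (-q - 2) * φ' R⁻¹)
      (Ioi 0) :=
    (integrable_indicator_iff measurableSet_Ioc).2 (integrableOn_const (by simp)) |>.integrableOn
  have j2 : IntegrableOn ((Ioi R).indicator
      fun s => A * σ'⁻¹ * R ^ (-δ') * φ' R⁻¹ * s ^ (δ' - q - 2)) (Ioi 0) :=
    (integrable_indicator_iff measurableSet_Ioi).2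
      ((integrableOn_Ioi_rpow_of_lt hp hR).const_mul _) |>.integrableOn
  have j3 : IntegrableOn ((Ioi lam₀⁻¹).indicator fun s => lam₀ ^ q * μ s) (Ioi 0) :=
    (integrable_indicator_iff measurableSet_Ioi).2 (hμT.const_mul _) |>.integrableOn
  have hpt (t : ℝ) (ht : 0 < t) := kernel_mul_density_le hq hμpos hA hup hK hφ'pos hφ'dec hlam₀
    hσ' hlow hR ht
  have hint : IntegrableOn (fun t => t ^ (-q) * exp (-(R / (4 * t))) * μ t) (Ioi 0) := by
    refine ((j1.add j2).add j3).mono' ((Measurable.aestronglyMeasurable (by fun_prop)).mul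
      (aestronglyMeasurable_of_antitone hμdec)) ?_
    refine (ae_restrict_iff' measurableSet_Ioi).2 (.of_forall fun t (ht : 0 < t) => ?_)
    have := hμpos t ht
    rw [norm_of_nonneg (by positivity)]
    exact hpt t ht
  refine ⟨hint, (setIntegral_mono_on hint ((j1.add j2).add j3) measurableSet_Ioi hpt).trans ?_⟩
  rw [integral_add' (j1.add j2) j3, integral_add' j1 j2,
    setIntegral_indicator measurableSet_Ioc, setIntegral_indicator measurableSet_Ioi,
    setIntegral_indicator measurableSet_Ioi,
    inter_eq_self_of_subset_right (show Ioc 0 R ⊆ Ioi 0 from Ioc_subset_Ioi_self),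
    inter_eq_self_of_subset_right (Ioi_subset_Ioi hR.le),
    inter_eq_self_of_subset_right (Ioi_subset_Ioi hT.le), setIntegral_const,
    Real.volume_real_Ioc_of_le hR.le, integral_const_mul, integral_const_mul,
    integral_Ioi_rpow_of_lt hp hR, ← hM, smul_eq_mul]
  have e1 : (R - 0) * (A * K * R ^ (-q - 2) * φ' R⁻¹) = A * K * R ^ (-q - 1) * φ' R⁻¹ := by
    rw [show -q - 1 = -q - 2 + 1 by ring, rpow_add_one hR.ne']; ring
  have e2 : A * σ'⁻¹ * R ^ (-δ') * φ' R⁻¹ * (-R ^ (δ' - q - 2 + 1) / (δ' - q - 2 + 1)) =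
      A * σ'⁻¹ * (q + 1 - δ')⁻¹ * R ^ (-q - 1) * φ' R⁻¹ := by
    rw [show δ' - q - 2 + 1 = -(q + 1 - δ') by ring, neg_div_neg_eq,
      show -q - 1 = -δ' + -(q + 1 - δ') by ring, rpow_add hR]
    ring
  have e3 : lam₀ ^ q * M ≤ lam₀⁻¹ * M * (σ' * φ' lam₀)⁻¹ * R ^ (-q - 1) * φ' R⁻¹ := by
    have hx : 1 ≤ lam₀⁻¹ / R := (one_le_div hR).2 hRT
    have h1 := hlow _ hx lam₀ le_rfl
    rw [show lam₀ * (lam₀⁻¹ / R) = R⁻¹ by field_simp] at h1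
    have h2 : (lam₀⁻¹ / R) ^ (-q - 1) ≤ (lam₀⁻¹ / R) ^ (-δ') :=
      rpow_le_rpow_of_exponent_le hx (by linarith)
    calc lam₀ ^ q * M = lam₀⁻¹ * M * (σ' * φ' lam₀)⁻¹ * R ^ (-q - 1) *
          (σ' * (lam₀⁻¹ / R) ^ (-q - 1) * φ' lam₀) := by
          rw [div_rpow hT.le hR.le, inv_rpow hlam₀.le, ← rpow_neg hlam₀.le,
            show -(-q - 1) = q + 1 by ring, rpow_add_one hlam₀.ne']
          field_simp
      _ ≤ lam₀⁻¹ * M * (σ' * φ' lam₀)⁻¹ * R ^ (-q - 1) *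
          (σ' * (lam₀⁻¹ / R) ^ (-δ') * φ' lam₀) := by gcongr
      _ ≤ _ := by gcongr
  rw [e1, e2]
  linarith

end LevyDensity

/-- Under (A-2) (decreasing Lévy density `μ`), (A-3), and,
for `d ≤ 2`, condition (B), the radial Lévy density
`j(r) = ∫₀^∞ (4πt)^{−d/2} e^{−r²/(4t)} μ(t) dt` of the subordinate Brownian
motion satisfies `j(r) ≍ r^{−d−2} φ'(r^{−2})` as `r → 0+`. -/
theorem stmt_7 (d : ℕ) (hd : 1 ≤ d) (μ φ φ' : ℝ → ℝ) (σ lam₀ δ : ℝ)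
    (hμpos : ∀ t : ℝ, 0 < t → 0 < μ t)
    (hμdec : ∀ s t : ℝ, 0 < s → s ≤ t → μ t ≤ μ s)
    (hμint : IntegrableOn (fun t => min 1 t * μ t) (Ioi 0))
    (hφ : ∀ l : ℝ, 0 < l →
      φ l = ∫ t in Ioi (0:ℝ), (1 - Real.exp (-(l * t))) * μ t)
    (hderiv : ∀ l : ℝ, 0 < l → HasDerivAt φ (φ' l) l)
    (hφ'pos : ∀ l : ℝ, 0 < l → 0 < φ' l)
    (hφ'dec : ∀ s t : ℝ, 0 < s → s ≤ t → φ' t ≤ φ' s)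
    (hη₁ : ∀ s t : ℝ, 0 < s → s ≤ t → s ^ 2 * φ' s ≤ t ^ 2 * φ' t)
    (hσ : 0 < σ) (hlam₀ : 0 < lam₀) (hδ0 : 0 < δ) (hδ1 : δ ≤ 1)
    (hA3 : ∀ x : ℝ, 1 ≤ x → ∀ l : ℝ, lam₀ ≤ l →
      φ' (l * x) ≤ σ * x ^ (-δ) * φ' l)
    (hB : d ≤ 2 → 0 < (d : ℝ) + 2 * δ - 2 ∧
      ∃ σ' : ℝ, 0 < σ' ∧ ∃ δ' : ℝ,
        1 - (d : ℝ) / 2 < δ' ∧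
        δ' < min (1 + (d : ℝ) / 2) (2 * δ + ((d : ℝ) - 2) / 2) ∧
        ∀ x : ℝ, 1 ≤ x → ∀ l : ℝ, lam₀ ≤ l →
          σ' * x ^ (-δ') * φ' l ≤ φ' (l * x)) :
    ∃ c₁ : ℝ, 0 < c₁ ∧ ∃ c₂ : ℝ, 0 < c₂ ∧ ∃ r₀ : ℝ, r₀ ∈ Ioo (0:ℝ) 1 ∧
      ∀ r : ℝ, 0 < r → r < r₀ →
        c₁ * r ^ (-(d : ℝ) - 2) * φ' ((r ^ 2)⁻¹)
            ≤ (∫ t in Ioi (0:ℝ),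
                (4 * π * t) ^ (-(d : ℝ) / 2) * Real.exp (-(r ^ 2 / (4 * t))) * μ t) ∧
        (∫ t in Ioi (0:ℝ),
            (4 * π * t) ^ (-(d : ℝ) / 2) * Real.exp (-(r ^ 2 / (4 * t))) * μ t)
          ≤ c₂ * r ^ (-(d : ℝ) - 2) * φ' ((r ^ 2)⁻¹) := by
  have hrep (l : ℝ) (hl : 0 < l) := laplaceExponent_deriv_eq hμpos hμdec hμint hφ hderiv hl
  obtain ⟨c, hc, a₀, ha₀, hlower⟩ := exists_le_density hμpos hμdec hrep hφ'pos hφ'dec hσ hlam₀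
    hδ0 hA3
  obtain ⟨σ', hσ', δ', hδ', hlow⟩ : ∃ σ' : ℝ, 0 < σ' ∧ ∃ δ' : ℝ, δ' < (d : ℝ) / 2 + 1 ∧
      ∀ x : ℝ, 1 ≤ x → ∀ l : ℝ, lam₀ ≤ l → σ' * x ^ (-δ') * φ' l ≤ φ' (l * x) := by
    rcases le_or_gt d 2 with h | h
    · obtain ⟨-, σ', hσ', δ', -, hδ', hlow⟩ := hB h
      exact ⟨σ', hσ', δ', by linarith [hδ'.trans_le (min_le_left _ _)], hlow⟩
    · have h' : (2 : ℝ) < d := by exact_mod_cast h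
      refine ⟨1, one_pos, 2, by linarith, fun x hx l hl => ?_⟩
      have hl0 : 0 < l := hlam₀.trans_le hl
      have hx0 : 0 < x := one_pos.trans_le hx
      have := hη₁ l (l * x) hl0 (le_mul_of_one_le_right hl0.le hx)
      rw [one_mul, rpow_neg hx0.le, rpow_two, inv_mul_le_iff₀ (by positivity)]
      refine le_of_mul_le_mul_left ?_ (by positivity : 0 < l ^ 2)
      linarith
  set q : ℝ := (d : ℝ) / 2 with hq
  have hq0 : 0 ≤ q := by positivity
  obtain ⟨C, hC, hupper⟩ := exists_integral_kernel_mul_density_le hq0 hμpos hμdec hμint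
    (by positivity) (fun a ha => density_le hμpos hμdec hrep ha) hφ'pos hφ'dec hlam₀ hσ' hδ' hlow
  refine ⟨(4 * π) ^ (-q) * (exp (-(1 / 2)) * c / 2), by positivity, (4 * π) ^ (-q) * C,
    by positivity, min (1 / 2) (min a₀ lam₀⁻¹), ⟨by positivity, ?_⟩, fun r hr hrr => ?_⟩
  · exact (min_le_left _ _).trans_lt (by norm_num)
  have hr1 : r < 1 / 2 := hrr.trans_le (min_le_left _ _)
  have hra : r < a₀ := hrr.trans_le ((min_le_right _ _).trans (min_le_left _ _))
  have hrT : r < lam₀⁻¹ := hrr.trans_le ((min_le_right _ _).trans (min_le_right _ _))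
  have hRr : r ^ 2 ≤ r := by nlinarith
  have hR : 0 < r ^ 2 := by positivity
  obtain ⟨hint, hle⟩ := hupper _ hR (hRr.trans hrT.le)
  have hpow : r ^ (-(d : ℝ) - 2) = (r ^ 2) ^ (-q - 1) := by
    rw [← rpow_natCast, ← rpow_mul hr.le]
    congr 1
    rw [hq]; push_cast; ring
  have hj : ∫ t in Ioi (0 : ℝ), (4 * π * t) ^ (-(d : ℝ) / 2) * exp (-(r ^ 2 / (4 * t))) * μ t =
      (4 * π) ^ (-q) * ∫ t in Ioi (0 : ℝ), t ^ (-q) * exp (-(r ^ 2 / (4 * t))) * μ t := by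
    rw [← integral_const_mul]
    refine setIntegral_congr_fun measurableSet_Ioi fun t (ht : 0 < t) => ?_
    rw [neg_div, ← hq, mul_rpow (by positivity) ht.le]
    ring
  rw [hj, hpow]
  generalize r ^ 2 = R at *
  have hΦ := hφ'pos _ (inv_pos.2 hR)
  constructor
  · have h := const_mul_half_le_integral_Ioi (c := R ^ (-q) * exp (-(1 / 2)) * μ R) hR hint
      (fun t ht => by have := hμpos t ht; positivity) fun t ht => by
        have ht0 : 0 < t := (half_pos hR).trans ht.1
        have hμR := hμpos R hR
        have h1 : R ^ (-q) ≤ t ^ (-q) := rpow_le_rpow_of_nonpos ht0 ht.2 (by linarith)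
        have h2 : R / (4 * t) ≤ 1 / 2 := by
          rw [div_le_iff₀ (by positivity)]; linarith [ht.1]
        have h3 := hμdec t R ht0 ht.2
        gcongr
    have h4 := hlower R hR (hRr.trans hra.le)
    have h5 : exp (-(1 / 2)) * c / 2 * R ^ (-q - 1) * φ' R⁻¹ ≤
        R ^ (-q) * exp (-(1 / 2)) * μ R * (R / 2) := by
      calc exp (-(1 / 2)) * c / 2 * R ^ (-q - 1) * φ' R⁻¹ =
            R ^ (-q) * exp (-(1 / 2)) * (c * (R ^ 2)⁻¹ * φ' R⁻¹) * (R / 2) := by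
            rw [rpow_sub_one hR.ne']; field_simp
        _ ≤ _ := by gcongr
    calc _ = (4 * π) ^ (-q) * (exp (-(1 / 2)) * c / 2 * R ^ (-q - 1) * φ' R⁻¹) := by ring
      _ ≤ _ := by gcongr; exact h5.trans h
  · calc _ ≤ (4 * π) ^ (-q) * (C * R ^ (-q - 1) * φ' R⁻¹) := by gcongr
      _ = _ := by ring
end

section
/- Let d ≥ 1 be an integer, let φ : (0,∞) → (0,∞) and let u : (0,∞) → (0,∞) be measurable with ∫₀^∞ e^{−λt} u(t) dt = 1/φ(λ) for all λ > 0. If ∫₀^R λ^{d/2 − 1}/φ(λ) dλ < ∞ for some R > 0, then ∫₁^∞ t^{−d/2} u(t) dt < ∞. -/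
open MeasureTheory Real Set

/-- The truncated Gamma integral `∫₀^R l^(s-1) e^(-lt) dl` dominates a multiple of `t^(-s)`
for `t ≥ 1`. -/
theorem rpow_neg_le_integral_rpow_mul_exp {s R t : ℝ} (hs : 0 < s) (hR : 0 < R) (ht : 1 ≤ t) :
    exp (-R) * (R ^ s / s) * t ^ (-s) ≤ ∫ l in Ioo 0 R, l ^ (s - 1) * exp (-(l * t)) := by
  have ht0 : 0 < t := by linarith
  have hRt : 0 < R / t := div_pos hR ht0
  have hpow : ∀ a : ℝ, 0 ≤ a → IntegrableOn (fun l : ℝ => l ^ (s - 1)) (Ioo 0 a) := by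
    intro a ha
    have h := intervalIntegral.intervalIntegrable_rpow' (a := 0) (b := a) (r := s - 1)
      (by linarith)
    rw [intervalIntegrable_iff_integrableOn_Ioo_of_le ha] at h
    exact h
  have hint : IntegrableOn (fun l : ℝ => l ^ (s - 1) * exp (-(l * t))) (Ioo 0 R) := by
    refine Integrable.mono' (hpow R hR.le) (by fun_prop) ?_
    filter_upwards [ae_restrict_mem measurableSet_Ioo] with l hl
    have h1 : 0 ≤ l ^ (s - 1) := rpow_nonneg hl.1.le _
    rw [norm_of_nonneg (by positivity)]
    exact mul_le_of_le_one_right h1 (exp_le_one_iff.2 (by nlinarith [hl.1]))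
  have hsub : Ioo 0 (R / t) ⊆ Ioo 0 R := Ioo_subset_Ioo_right (div_le_self hR.le ht)
  calc exp (-R) * (R ^ s / s) * t ^ (-s)
      = ∫ l in Ioo 0 (R / t), l ^ (s - 1) * exp (-R) := by
        rw [integral_mul_const, ← integral_Ioc_eq_integral_Ioo,
          ← intervalIntegral.integral_of_le hRt.le, integral_rpow (Or.inl (by linarith)),
          sub_add_cancel, zero_rpow hs.ne', div_rpow hR.le ht0.le, rpow_neg ht0.le]
        field_simp
        ring
    _ ≤ ∫ l in Ioo 0 (R / t), l ^ (s - 1) * exp (-(l * t)) := by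
        refine setIntegral_mono_on ((hpow _ hRt.le).mul_const _) (hint.mono_set hsub)
          measurableSet_Ioo fun l hl => ?_
        have h1 : l * t < R := (lt_div_iff₀ ht0).1 hl.2
        have h2 : 0 ≤ l ^ (s - 1) := rpow_nonneg hl.1.le _
        gcongr
    _ ≤ ∫ l in Ioo 0 R, l ^ (s - 1) * exp (-(l * t)) := by
        refine setIntegral_mono_set hint ?_ hsub.eventuallyLE
        filter_upwards [ae_restrict_mem measurableSet_Ioo] with l hl
        exact mul_nonneg (rpow_nonneg hl.1.le _) (exp_pos _).le

/-- If `u : (0,∞) → (0,∞)` is measurable with Laplace transform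
`∫₀^∞ e^{−λt} u(t) dt = 1/φ(λ)` for all `λ > 0`, and
`∫₀^R λ^{d/2−1}/φ(λ) dλ < ∞` for some `R > 0` (Chung–Fuchs transience
criterion), then `∫₁^∞ t^{−d/2} u(t) dt < ∞`. -/
theorem stmt_8 (d : ℕ) (hd : 1 ≤ d) (φ u : ℝ → ℝ)
    (hφpos : ∀ l : ℝ, 0 < l → 0 < φ l)
    (hupos : ∀ t : ℝ, 0 < t → 0 < u t)
    (humeas : Measurable u)
    (hlap : ∀ l : ℝ, 0 < l →
      (∫ t in Ioi (0:ℝ), Real.exp (-(l * t)) * u t) = 1 / φ l)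
    (R : ℝ) (hR : 0 < R)
    (hfin : IntegrableOn (fun l => l ^ ((d : ℝ) / 2 - 1) / φ l) (Ioo 0 R)) :
    IntegrableOn (fun t => t ^ (-(d : ℝ) / 2) * u t) (Ioi 1) := by
  set s : ℝ := (d : ℝ) / 2 with hs_def
  have hs : 0 < s := by
    have : (1 : ℝ) ≤ d := by exact_mod_cast hd
    positivity
  have hlapint : ∀ l : ℝ, 0 < l →
      IntegrableOn (fun t => exp (-(l * t)) * u t) (Ioi (0 : ℝ)) := by
    intro l hl
    by_contra h
    have h0 := hlap l hl
    rw [integral_undef h] at h0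
    exact (one_div_pos.2 (hφpos l hl)).ne h0
  have hprod : Integrable (fun p : ℝ × ℝ => p.1 ^ (s - 1) * (exp (-(p.1 * p.2)) * u p.2))
      ((volume.restrict (Ioo 0 R)).prod (volume.restrict (Ioi 0))) := by
    rw [integrable_prod_iff (Measurable.aestronglyMeasurable (by fun_prop))]
    constructor
    · filter_upwards [ae_restrict_mem measurableSet_Ioo] with l hl
      exact (hlapint l hl.1).const_mul _
    · refine hfin.congr ?_
      filter_upwards [ae_restrict_mem measurableSet_Ioo] with l hl
      have hnorm : ∫ t in Ioi (0 : ℝ), ‖l ^ (s - 1) * (exp (-(l * t)) * u t)‖ =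
          ∫ t in Ioi (0 : ℝ), l ^ (s - 1) * (exp (-(l * t)) * u t) :=
        setIntegral_congr_fun measurableSet_Ioi fun t ht => norm_of_nonneg
          (mul_nonneg (rpow_nonneg hl.1.le _) (mul_nonneg (exp_pos _).le (hupos t ht).le))
      rw [hnorm, integral_const_mul, hlap l hl.1, mul_one_div]
  have hswap : IntegrableOn
      (fun t => ∫ l in Ioo 0 R, l ^ (s - 1) * (exp (-(l * t)) * u t)) (Ioi 1) :=
    IntegrableOn.mono_set hprod.integral_prod_right (Ioi_subset_Ioi zero_le_one)
  have hC : 0 < exp (-R) * (R ^ s / s) := by positivity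
  refine Integrable.mono' (hswap.const_mul (exp (-R) * (R ^ s / s))⁻¹)
    (Measurable.aestronglyMeasurable (by fun_prop)) ?_
  filter_upwards [ae_restrict_mem measurableSet_Ioi] with t ht
  have ht1 : 1 < t := ht
  have ht0 : 0 < t := by linarith
  have hu := hupos t ht0
  rw [norm_of_nonneg (by positivity), neg_div, ← hs_def, le_inv_mul_iff₀ hC, ← mul_assoc]
  simp_rw [← mul_assoc (_ ^ (s - 1))]
  rw [integral_mul_const]
  exact mul_le_mul_of_nonneg_right (rpow_neg_le_integral_rpow_mul_exp hs hR ht1.le) hu.le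
end
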